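/- arXiv:math/0408031 — 2 statements merged into one kernel-verified Lean document; each statement's English description precedes it below -/
import Mathlib

section
/- For every n ≥ 0, the sum over all cycle structures (i_1,…,i_n) with ∑_{l=1}^{n} l·i_l = n of ∏_{l=1}^{n} 1/((2l)^{i_l}·i_l!) equals (2n−1)!!/(n!·2^n). -/
/-! For weights `c l` attached to parts of size `w l`, let `Z m` be the sum of
`∏ l, c l ^ i l / (i l)!` over all `i` with `∑ l, w l * i l = m`. Marking one part gives
`m * Z m = ∑ l, w l * c l * Z (m - w l)`, which is the logarithmic derivative of
`∑ m, Z m * X ^ m = exp (∑ l, c l * X ^ w l)` read off coefficientwise. For parts `1, 2, 3, …` with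
`c l = θ / l` every factor `w l * c l` equals `θ`, so `m * Z m` is `θ` times the sum of the `Z k`
with `k < m`. Subtracting consecutive instances leaves `(m + 1) * Z (m + 1) = (m + θ) * Z m`, the
recurrence of `θ (θ + 1) ⋯ (θ + m - 1) / m!`; the double factorial is the case `θ = 1 / 2`. -/

section WeightedExpSum

open Finset
open scoped Nat

variable {ι : Type*}

lemma sub_single_one_add_cancel [DecidableEq ι] {i : ι → ℕ} {l : ι} (hl : i l ≠ 0) :
    i - Pi.single l 1 + Pi.single l 1 = i := by
  refine tsub_add_cancel_of_le fun x ↦ ?_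
  obtain rfl | hx := eq_or_ne x l
  · simpa using Nat.one_le_iff_ne_zero.mpr hl
  · simp [hx]

variable [Fintype ι]

lemma mul_apply_le_dotProduct {R : Type*} [NonUnitalNonAssocSemiring R] [PartialOrder R]
    [CanonicallyOrderedAdd R] (w i : ι → R) (l : ι) :
    w l * i l ≤ w ⬝ᵥ i :=
  single_le_sum_of_canonicallyOrdered (f := fun l ↦ w l * i l) (mem_univ l)

variable [DecidableEq ι]

lemma dotProduct_add_single_one {R : Type*} [NonAssocSemiring R] (w j : ι → R) (l : ι) :
    w ⬝ᵥ (j + Pi.single l 1) = w ⬝ᵥ j + w l := by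
  rw [dotProduct_add, dotProduct_single_one]

/-- The multiplicity vectors of total size `m`, where a part of kind `l` has size `w l`.
The bound `i l ≤ m` only makes the set finite: it is automatic when all sizes are positive. -/
def weightedAntidiagonal (w : ι → ℕ) (m : ℕ) : Finset (ι → ℕ) :=
  {i ∈ Fintype.piFinset fun _ ↦ range (m + 1) | w ⬝ᵥ i = m}

lemma dotProduct_eq_of_mem_weightedAntidiagonal {w : ι → ℕ} {m : ℕ} {i : ι → ℕ}
    (hi : i ∈ weightedAntidiagonal w m) : w ⬝ᵥ i = m :=
  (mem_filter.mp hi).2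

lemma mem_weightedAntidiagonal {w : ι → ℕ} (hw : ∀ l, 0 < w l) {m : ℕ} {i : ι → ℕ} :
    i ∈ weightedAntidiagonal w m ↔ w ⬝ᵥ i = m := by
  simp only [weightedAntidiagonal, mem_filter, Fintype.mem_piFinset, mem_range,
    and_iff_right_iff_imp, Nat.lt_succ_iff]
  rintro rfl l
  exact (Nat.le_mul_of_pos_left _ (hw l)).trans (mul_apply_le_dotProduct w i l)

lemma weightedAntidiagonal_zero (w : ι → ℕ) : weightedAntidiagonal w 0 = {0} := by
  ext i
  simp +contextual [weightedAntidiagonal, dotProduct, funext_iff]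

variable {K : Type*} [Semifield K]

/-- The coefficient of the monomial with exponent vector `i` in `exp (∑ l, c l * X l)`. -/
def expCoeff (c : ι → K) (i : ι → ℕ) : K :=
  ∏ l, c l ^ i l / (i l)!

/-- The coefficient of `X ^ m` in `exp (∑ l, c l * X ^ w l)`, for positive sizes `w l`. -/
def weightedExpSum (w : ι → ℕ) (c : ι → K) (m : ℕ) : K :=
  ∑ i ∈ weightedAntidiagonal w m, expCoeff c i

lemma weightedExpSum_zero (w : ι → ℕ) (c : ι → K) : weightedExpSum w c 0 = 1 := by
  simp [weightedExpSum, weightedAntidiagonal_zero, expCoeff]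

lemma sum_apply_mul_expCoeff_of_lt {w : ι → ℕ} (c : ι → K) {m : ℕ} {l : ι} (hm : m < w l) :
    ∑ i ∈ weightedAntidiagonal w m, i l * expCoeff c i = 0 := by
  refine sum_eq_zero fun i hi ↦ ?_
  have : i l = 0 := by
    by_contra hl
    have := dotProduct_eq_of_mem_weightedAntidiagonal hi
    have := mul_apply_le_dotProduct w i l
    have := Nat.le_mul_of_pos_right (w l) (Nat.pos_of_ne_zero hl)
    omega
  simp [this]

variable [CharZero K]

lemma succ_mul_expCoeff_add_single_one (c : ι → K) (j : ι → ℕ) (l : ι) :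
    (j l + 1 : ℕ) * expCoeff c (j + Pi.single l 1) = c l * expCoeff c j := by
  have prod_erase_eq :
      ∏ x ∈ univ.erase l, c x ^ (j + Pi.single l 1 : ι → ℕ) x / ((j + Pi.single l 1 : ι → ℕ) x)!
        = ∏ x ∈ univ.erase l, c x ^ j x / ((j x)! : K) :=
    prod_congr rfl fun x hx ↦ by simp [Pi.single_eq_of_ne (ne_of_mem_erase hx)]
  have factor_eq : ((j l + 1 : ℕ) : K) * (c l ^ (j l + 1) / (j l + 1)!)
      = c l * (c l ^ j l / (j l)!) := by
    have : ((j l + 1 : ℕ) : K) ≠ 0 := Nat.cast_ne_zero.mpr (Nat.succ_ne_zero _)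
    rw [Nat.factorial_succ, Nat.cast_mul, pow_succ]
    field_simp
  rw [expCoeff, expCoeff, ← mul_prod_erase _ _ (mem_univ l), prod_erase_eq,
    ← mul_prod_erase univ (fun x ↦ c x ^ j x / ((j x)! : K)) (mem_univ l), ← mul_assoc,
    ← mul_assoc, Pi.add_apply, Pi.single_eq_same, factor_eq]

/-- Adding a part of kind `l` is a bijection onto the multiplicity vectors with `i l ≠ 0`. -/
lemma sum_apply_mul_expCoeff {w : ι → ℕ} (hw : ∀ l, 0 < w l) (c : ι → K) (m : ℕ) (l : ι) :
    ∑ i ∈ weightedAntidiagonal w (m + w l), i l * expCoeff c i = c l * weightedExpSum w c m := by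
  rw [weightedExpSum, mul_sum]
  refine (sum_of_injOn (· + Pi.single l 1) (add_left_injective _).injOn ?_ ?_ ?_).symm
  · intro j hj
    rw [mem_coe, mem_weightedAntidiagonal hw] at hj ⊢
    rw [dotProduct_add_single_one, hj]
  · intro i hi hi_image
    suffices i l = 0 by simp [this]
    by_contra hl
    refine hi_image ⟨i - Pi.single l 1, ?_, sub_single_one_add_cancel hl⟩
    rw [mem_coe, mem_weightedAntidiagonal hw]
    apply Nat.add_right_cancel (m := w l)
    rw [← dotProduct_add_single_one, sub_single_one_add_cancel hl,
      dotProduct_eq_of_mem_weightedAntidiagonal hi]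
  · intro j _
    rw [Pi.add_apply, Pi.single_eq_same, succ_mul_expCoeff_add_single_one]

theorem mul_weightedExpSum {w : ι → ℕ} (hw : ∀ l, 0 < w l) (c : ι → K) (m : ℕ) :
    m * weightedExpSum w c m = ∑ l with w l ≤ m, w l * c l * weightedExpSum w c (m - w l) := by
  calc m * weightedExpSum w c m
      = ∑ i ∈ weightedAntidiagonal w m, ∑ l, w l * (i l * expCoeff c i) := by
        rw [weightedExpSum, mul_sum]
        refine sum_congr rfl fun i hi ↦ ?_
        rw [← dotProduct_eq_of_mem_weightedAntidiagonal hi]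
        simp only [dotProduct, Nat.cast_sum, Nat.cast_mul, sum_mul, mul_assoc]
    _ = ∑ l, w l * ∑ i ∈ weightedAntidiagonal w m, i l * expCoeff c i := by
        rw [sum_comm]
        simp only [mul_sum]
    _ = ∑ l with w l ≤ m, w l * c l * weightedExpSum w c (m - w l) := by
        rw [sum_filter]
        refine sum_congr rfl fun l _ ↦ ?_
        split_ifs with hl
        · rw [mul_assoc, ← sum_apply_mul_expCoeff hw, Nat.sub_add_cancel hl]
        · rw [sum_apply_mul_expCoeff_of_lt c (not_le.mp hl), mul_zero]

end WeightedExpSum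

section CycleSum

open Finset
open scoped Nat

variable {K : Type*} [Semifield K]

lemma ascPochhammer_eval_one_half [NeZero (2 : K)] (n : ℕ) :
    (ascPochhammer K n).eval (1 / 2) = (2 * n - 1)‼ / 2 ^ n := by
  induction n with
  | zero => simp
  | succ n ih =>
    have doubleFactorial_succ : (2 * (n + 1) - 1)‼ = (2 * n + 1) * (2 * n - 1)‼ :=
      Nat.doubleFactorial_add_one (2 * n)
    have two_ne_zero : (2 : K) ≠ 0 := NeZero.ne 2
    rw [ascPochhammer_succ_eval, ih, doubleFactorial_succ, pow_succ]
    push_cast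
    field_simp
    ring

/-- The total weight of the cycle structures of `m` with all cycles of length at most `N`, where
`l`-cycles carry the weight `θ / l`. The index `l : Fin N` stands for cycles of length `l + 1`. -/
def cycleSum (N : ℕ) (θ : K) (m : ℕ) : K :=
  weightedExpSum (fun l : Fin N ↦ (l : ℕ) + 1) (fun l ↦ θ / ((l : ℕ) + 1)) m

lemma cycleSum_eq_finsum (N : ℕ) (θ : K) (m : ℕ) :
    cycleSum N θ m = ∑ᶠ (i : Fin N → ℕ) (_ : ∑ l : Fin N, ((l : ℕ) + 1) * i l = m),
      ∏ l : Fin N, (θ / ((l : ℕ) + 1)) ^ i l / (i l)! := by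
  rw [cycleSum, weightedExpSum, ← finsum_mem_coe_finset]
  simp only [mem_coe, mem_weightedAntidiagonal (fun _ ↦ Nat.succ_pos _), dotProduct, expCoeff]

variable [CharZero K]

lemma mul_cycleSum (θ : K) {N m : ℕ} (hm : m ≤ N) :
    m * cycleSum N θ m = θ * ∑ k ∈ range m, cycleSum N θ k := by
  have weight_eq (l : ℕ) : ((l + 1 : ℕ) : K) * (θ / (l + 1)) = θ := by
    rw [Nat.cast_succ, mul_div_cancel₀ _ (Nat.cast_add_one_ne_zero l)]
  have filter_eq : {l ∈ range N | l + 1 ≤ m} = range m := by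
    ext l
    simp only [mem_filter, mem_range]
    omega
  rw [cycleSum, mul_weightedExpSum fun _ ↦ Nat.succ_pos _]
  simp only [weight_eq, ← cycleSum.eq_def]
  rw [sum_filter, Fin.sum_univ_eq_sum_range
    (fun l ↦ if l + 1 ≤ m then θ * cycleSum N θ (m - (l + 1)) else 0), ← sum_filter, filter_eq,
    ← mul_sum, ← sum_range_reflect (cycleSum N θ)]
  simp only [Nat.sub_sub, add_comm]

lemma succ_mul_cycleSum_succ (θ : K) {N m : ℕ} (hm : m + 1 ≤ N) :
    (m + 1) * cycleSum N θ (m + 1) = cycleSum N θ m * (θ + m) := by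
  rw [← Nat.cast_succ, mul_cycleSum θ hm, sum_range_succ, mul_add,
    ← mul_cycleSum θ (Nat.le_of_succ_le hm)]
  ring

theorem cycleSum_eq_ascPochhammer_eval_div_factorial (θ : K) {N m : ℕ} (hm : m ≤ N) :
    cycleSum N θ m = (ascPochhammer K m).eval θ / m ! := by
  induction m with
  | zero => simp [cycleSum, weightedExpSum_zero]
  | succ m ih =>
    have succ_ne_zero : (m + 1 : K) ≠ 0 := Nat.cast_add_one_ne_zero m
    apply mul_left_cancel₀ succ_ne_zero
    rw [succ_mul_cycleSum_succ θ hm, ih (Nat.le_of_succ_le hm), ascPochhammer_succ_eval,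
      Nat.factorial_succ, Nat.cast_mul, Nat.cast_succ]
    field_simp

end CycleSum

theorem sum_cycle_structures_eq_doubleFactorial_general {K : Type*} [Semifield K] [CharZero K]
    (θ : K) (n : ℕ) :
    (∑ᶠ (i : Fin n → ℕ) (_ : ∑ l : Fin n, ((l : ℕ) + 1) * i l = n),
        ∏ l : Fin n, (θ / ((l : ℕ) + 1)) ^ i l / Nat.factorial (i l))
      = (ascPochhammer K n).eval θ / Nat.factorial n :=
  (cycleSum_eq_finsum n θ n).symm.trans (cycleSum_eq_ascPochhammer_eval_div_factorial θ le_rfl)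

/-- For every `n ≥ 0`, the sum over all cycle structures `(i_1, …, i_n)` with
`∑_{l=1}^n l·i_l = n` of `∏_{l=1}^n 1/((2l)^{i_l} · i_l!)` equals `(2n−1)!!/(n!·2^n)`.
Here a cycle structure is encoded as `i : Fin n → ℕ`, with `i l` playing the role of
`i_{l+1}`. -/
theorem sum_cycle_structures_eq_doubleFactorial (n : ℕ) :
    (∑ᶠ (i : Fin n → ℕ) (_ : ∑ l : Fin n, ((l : ℕ) + 1) * i l = n),
        ∏ l : Fin n, (1 : ℚ) / ((2 * ((l : ℕ) + 1)) ^ i l * Nat.factorial (i l)))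
      = (Nat.doubleFactorial (2 * n - 1) : ℚ) / (Nat.factorial n * 2 ^ n) := by
  simpa only [div_div, one_div_pow, ascPochhammer_eval_one_half, mul_comm (2 ^ n : ℚ)]
    using sum_cycle_structures_eq_doubleFactorial_general (1 / 2 : ℚ) n
end

section
/- The expected length of the longest cycle of a random n-cyclation satisfies Ex[M_n] ∼ (∫_0^∞ e^{−E(x)/2 − x} dx)·n as n → ∞, i.e. Ex[M_n]/n tends to ∫_0^∞ e^{−E(x)/2 − x} dx, where E(x) = ∫_x^∞ (e^{−y}/y) dy. -/
/-- The fixed involution pairing the two endpoints of each interval: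
endpoint `2m` is paired with endpoint `2m+1`. -/
def intervalPerm (n : ℕ) : Equiv.Perm (Fin (2 * n)) :=
  Function.Involutive.toPerm
    (fun x => ⟨if x.1 % 2 = 0 then x.1 + 1 else x.1 - 1, by
      have := x.2; split <;> omega⟩)
    (fun x => by
      have := x.2
      ext
      simp only
      split_ifs <;> omega)

/-- An `n`-cyclation: a fixed-point-free involution (perfect matching) on the `2*n`
endpoints of the `n` intervals. -/
def Cyclation (n : ℕ) : Type :=
  {μ : Equiv.Perm (Fin (2 * n)) // (∀ x, μ x ≠ x) ∧ μ * μ = 1}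

instance (n : ℕ) : Finite (Cyclation n) := Subtype.finite

noncomputable instance (n : ℕ) : Fintype (Cyclation n) := Fintype.ofFinite _

/-- The subgroup generated by the matching and the interval pairing; its orbits on the
endpoints are exactly the connected components (cycles) of the cyclation, viewed as the
multigraph whose edges are the intervals together with the matched pairs. -/
def cycGroup {n : ℕ} (c : Cyclation n) : Subgroup (Equiv.Perm (Fin (2 * n))) :=
  Subgroup.closure {c.1, intervalPerm n}

/-- Number of cycles of a cyclation: the number of connected components, i.e. the number
of orbits of `cycGroup c` on the endpoints. -/
noncomputable def cycNumCycles {n : ℕ} (c : Cyclation n) : ℕ :=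
  Nat.card (MulAction.orbitRel.Quotient (cycGroup c) (Fin (2 * n)))

/-- Number of cycles of length `l` of a cyclation (a cycle containing `l` intervals is a
connected component with `2*l` endpoints). -/
noncomputable def cycNumCyclesOfLength {n : ℕ} (c : Cyclation n) (l : ℕ) : ℕ :=
  Nat.card {q : MulAction.orbitRel.Quotient (cycGroup c) (Fin (2 * n)) // q.orbit.ncard = 2 * l}

/-- Length (number of intervals) of the longest cycle of a cyclation. -/
noncomputable def longestCycle {n : ℕ} (c : Cyclation n) : ℕ :=
  (Finset.univ.sup fun x : Fin (2 * n) => (MulAction.orbit (cycGroup c) x).ncard) / 2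

/-- Length (number of intervals) of the shortest cycle of a cyclation. -/
noncomputable def shortestCycle {n : ℕ} (c : Cyclation n) : ℕ :=
  sInf (Set.range fun x : Fin (2 * n) => (MulAction.orbit (cycGroup c) x).ncard / 2)

/-- `Ex[M_n]`: the expected length of the longest cycle of a uniformly random
`n`-cyclation, i.e. the average of the longest cycle length over all `n`-cyclations. -/
noncomputable def ExM (n : ℕ) : ℝ :=
  (∑ c : Cyclation n, (longestCycle c : ℝ)) / Fintype.card (Cyclation n)

/-- `Ex[T_n]`: the expected length of the shortest cycle of a uniformly random
`n`-cyclation, i.e. the average of the shortest cycle length over all `n`-cyclations. -/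
noncomputable def ExT (n : ℕ) : ℝ :=
  (∑ c : Cyclation n, (shortestCycle c : ℝ)) / Fintype.card (Cyclation n)

/-- The exponential integral `E(x) = ∫_x^∞ e^{-y}/y dy`. -/
noncomputable def Efun (x : ℝ) : ℝ := ∫ y in Set.Ioi x, Real.exp (-y) / y

/-!
Adding one interval to an `n`-cyclation, either as a cycle of its own or next to one of the `2n`
endpoints, produces every `(n + 1)`-cyclation exactly once. A cycle of length `l` thus grows in `2l`
ways, which determines the generating function of all cyclations, `(1 - x) ^ (-1/2)` in the
normalisation `x ^ n / (2 ^ n n!)`, and that of the cyclations without cycles longer than `k`, which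
is smaller by the factor `exp (-(∑_{l > k} x ^ l / l) / 2)`. It also shows that `Ex[M_n] / (2n + 1)`
is monotone, hence convergent.

So the limit may be computed as an Abelian limit. Averaged over `n` with weights proportional to the
terms of the power series of `(1 - x) ^ (-3/2)`, the ratio `Ex[M_n] / (2n + 1)` equals
`(1 - x) ∑_k (1 - exp (-(∑_{l > k} x ^ l / l) / 2))`. For `x = exp (-s)` and `s → 0⁺` this is
asymptotically a Riemann sum of mesh `s` for `∫ (1 - exp (-E(u) / 2)) du` over `u > 0`, and an
integration by parts gives the stated constant.
-/

/-! ### Inserting an interval -/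

section Insertion

open Equiv
open Sum (inl inr)

section PerfectMatching

variable {α β : Type*}

/-- A perfect matching of `α`, encoded as the fixed-point-free involution that exchanges
matched points. -/
def IsPerfectMatching (μ : Perm α) : Prop :=
  (∀ x, μ x ≠ x) ∧ μ * μ = 1

theorem IsPerfectMatching.apply_apply {μ : Perm α} (hμ : IsPerfectMatching μ) (x : α) :
    μ (μ x) = x := by
  rw [← Perm.mul_apply, hμ.2, Perm.one_apply]

theorem isPerfectMatching_permCongr_iff (e : α ≃ β) {μ : Perm α} :
    IsPerfectMatching (e.permCongr μ) ↔ IsPerfectMatching μ := by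
  refine and_congr ?_ ?_
  · refine e.forall_congr_right.symm.trans (forall_congr' fun x => ?_)
    rw [permCongr_apply, e.symm_apply_apply, e.injective.ne_iff]
  · rw [← permCongr_mul, ← e.permCongrHom.injective.eq_iff, map_one]
    rfl

theorem isPerfectMatching_swap_fin_two : IsPerfectMatching (swap (0 : Fin 2) 1) :=
  ⟨by decide, swap_mul_self _ _⟩

theorem perm_sumCongr_inj {μ μ' : Perm α} {ν ν' : Perm β} :
    Perm.sumCongr μ ν = Perm.sumCongr μ' ν' ↔ μ = μ' ∧ ν = ν' :=
  (Perm.sumCongrHom_injective.eq_iff (a := (μ, ν)) (b := (μ', ν'))).trans Prod.mk_inj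

theorem isPerfectMatching_sumCongr_iff {μ : Perm α} {ν : Perm β} :
    IsPerfectMatching (Perm.sumCongr μ ν) ↔ IsPerfectMatching μ ∧ IsPerfectMatching ν := by
  simp only [IsPerfectMatching, Sum.forall, Perm.sumCongr_apply, Sum.map_inl, Sum.map_inr, ne_eq,
    inl.injEq, inr.injEq, Perm.sumCongr_mul, ← Perm.sumCongr_one, perm_sumCongr_inj]
  tauto

theorem IsPerfectMatching.exists_eq_sumCongr [Finite α] {κ : Perm (α ⊕ Fin 2)}
    (hκ : IsPerfectMatching κ) (h₀ : κ (inr 0) = inr 1) :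
    ∃ μ : Perm α, κ = Perm.sumCongr μ (swap 0 1) := by
  have h₁ : κ (inr 1) = inr 0 := by rw [← h₀, hκ.apply_apply]
  have maps : Set.MapsTo κ (Set.range inl) (Set.range inl) := by
    rintro _ ⟨x, rfl⟩
    rcases hx : κ (inl x) with y | i
    · exact ⟨y, rfl⟩
    · have := hκ.apply_apply (inl x)
      fin_cases i <;> simp_all
  obtain ⟨⟨μ, ν⟩, rfl⟩ := Perm.mem_sumCongrHom_range_of_perm_mapsTo_inl maps
  obtain rfl : ν = swap 0 1 := by
    simp only [Perm.sumCongrHom_apply, Perm.sumCongr_apply, Sum.map_inr, inr.injEq] at h₀ h₁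
    ext i
    fin_cases i <;> simp [h₀, h₁]
  exact ⟨μ, rfl⟩

/-- The point that `Sum.inr 0` gets matched with by `insertPair μ o`. -/
def pairPartner (o : Option α) : α ⊕ Fin 2 :=
  o.elim (inr 1) inl

theorem pairPartner_injective : Function.Injective (pairPartner (α := α)) := by
  rintro (_ | x) (_ | y) <;> simp [pairPartner]

theorem pairPartner_ne_inr_zero (o : Option α) : pairPartner o ≠ inr 0 := by
  cases o <;> simp [pairPartner]

variable [DecidableEq α]

/-- The matching of `α` together with two new points `inr 0` and `inr 1` obtained from a
matching `μ` of `α` as follows: for `o = none` the new points are matched with each other, while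
for `o = some x` the point `inr 0` is matched with `x` and `inr 1` with the former partner of `x`.
It is encoded as a conjugate of the first kind by the transposition of `inr 1` and `x`. -/
def insertPair (μ : Perm α) (o : Option α) : Perm (α ⊕ Fin 2) :=
  (swap (inr 1) (pairPartner o)).permCongr (Perm.sumCongr μ (swap 0 1))

theorem insertPair_apply (μ : Perm α) (o : Option α) (z : α ⊕ Fin 2) :
    insertPair μ o z = swap (inr 1) (pairPartner o)
      (Perm.sumCongr μ (swap 0 1) (swap (inr 1) (pairPartner o) z)) :=
  rfl

theorem insertPair_inr_zero (μ : Perm α) (o : Option α) :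
    insertPair μ o (inr 0) = pairPartner o := by
  rw [insertPair_apply, swap_apply_of_ne_of_ne (by simp) (pairPartner_ne_inr_zero o).symm]
  simp

theorem isPerfectMatching_insertPair_iff {μ : Perm α} {o : Option α} :
    IsPerfectMatching (insertPair μ o) ↔ IsPerfectMatching μ := by
  rw [insertPair, isPerfectMatching_permCongr_iff, isPerfectMatching_sumCongr_iff,
    and_iff_left isPerfectMatching_swap_fin_two]

theorem insertPair_inj {μ ν : Perm α} {o p : Option α} :
    insertPair μ o = insertPair ν p ↔ μ = ν ∧ o = p := by
  refine ⟨fun h => ?_, by rintro ⟨rfl, rfl⟩; rfl⟩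
  obtain rfl : o = p := pairPartner_injective <| by
    rw [← insertPair_inr_zero μ o, h, insertPair_inr_zero]
  have h' := (swap (inr 1) (pairPartner o)).permCongr.injective h
  exact ⟨(perm_sumCongr_inj.1 h').1, rfl⟩

theorem IsPerfectMatching.exists_eq_insertPair [Finite α] {ν : Perm (α ⊕ Fin 2)}
    (hν : IsPerfectMatching ν) :
    ∃ μ o, IsPerfectMatching μ ∧ ν = insertPair μ o := by
  obtain ⟨o, ho⟩ : ∃ o, ν (inr 0) = pairPartner o := by
    rcases h : ν (inr 0) with x | i
    · exact ⟨some x, rfl⟩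
    · have := hν.1 (inr 0)
      exact ⟨none, by fin_cases i <;> simp_all [pairPartner]⟩
  set τ : Perm (α ⊕ Fin 2) := swap (inr 1) (pairPartner o) with hτ
  have hττ : τ.permCongr (τ.permCongr ν) = ν := by ext; simp [hτ]
  have h₀ : τ.permCongr ν (inr 0) = inr 1 := by
    rw [permCongr_apply, hτ, symm_swap,
      swap_apply_of_ne_of_ne (by simp) (pairPartner_ne_inr_zero o).symm, ho, swap_apply_right]
  obtain ⟨μ, hμ⟩ := ((isPerfectMatching_permCongr_iff τ).2 hν).exists_eq_sumCongr h₀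
  have hνμ : ν = insertPair μ o := by rw [insertPair, ← hμ, hττ]
  exact ⟨μ, o, isPerfectMatching_insertPair_iff.1 (hνμ ▸ hν), hνμ⟩

end PerfectMatching

/-- The identification of the endpoints of `n + 1` intervals with the endpoints of the first `n`
intervals together with the two endpoints of the last one. -/
def endpointEquiv (n : ℕ) : Fin (2 * n) ⊕ Fin 2 ≃ Fin (2 * (n + 1)) :=
  finSumFinEquiv

theorem permCongr_endpointEquiv_sumCongr_intervalPerm (n : ℕ) :
    (endpointEquiv n).permCongr (Perm.sumCongr (intervalPerm n) (swap 0 1)) =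
      intervalPerm (n + 1) := by
  refine Equiv.ext ((endpointEquiv n).forall_congr_right.1 ?_)
  rintro (x | i) <;> rw [permCongr_apply, symm_apply_apply]
  · rfl
  · ext
    change 2 * n + (swap 0 1 i).val =
      if (2 * n + i.val) % 2 = 0 then 2 * n + i.val + 1 else 2 * n + i.val - 1
    fin_cases i <;> simp

namespace Cyclation

/-- The cyclation obtained from `c` by adding one interval: for `o = none` it closes up to a cycle
of its own, for `o = some x` it is inserted into the cycle of `x`, next to the endpoint `x`. -/
def insertInterval {n : ℕ} (c : Cyclation n) (o : Option (Fin (2 * n))) : Cyclation (n + 1) :=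
  ⟨(endpointEquiv n).permCongr (insertPair c.1 o),
    (isPerfectMatching_permCongr_iff _).2 (isPerfectMatching_insertPair_iff.2 c.2)⟩

theorem insertInterval_bijective (n : ℕ) :
    Function.Bijective fun p : Cyclation n × Option (Fin (2 * n)) => p.1.insertInterval p.2 := by
  constructor
  · rintro ⟨c, o⟩ ⟨d, p⟩ h
    have h' := insertPair_inj.1 ((endpointEquiv n).permCongr.injective (congrArg Subtype.val h))
    exact Prod.ext (Subtype.ext h'.1) h'.2
  · intro c
    obtain ⟨μ, o, hμ, h⟩ :=
      ((isPerfectMatching_permCongr_iff (endpointEquiv n).symm).2 c.2).exists_eq_insertPair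
    refine ⟨(⟨μ, hμ⟩, o), Subtype.ext ?_⟩
    exact (congrArg _ h.symm).trans ((endpointEquiv n).permCongr.apply_symm_apply c.1)

theorem sum_succ {n : ℕ} {A : Type*} [AddCommMonoid A] (F : Cyclation (n + 1) → A) :
    ∑ c, F c = ∑ c : Cyclation n,
      (F (c.insertInterval none) + ∑ x, F (c.insertInterval (some x))) := by
  rw [← (Equiv.ofBijective _ (insertInterval_bijective n)).sum_comp, Fintype.sum_prod_type]
  simp only [ofBijective_apply, Fintype.sum_option]

theorem card_zero : Fintype.card (Cyclation 0) = 1 :=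
  Fintype.card_eq_one_iff.2
    ⟨⟨1, fun x => x.elim0, one_mul 1⟩, fun _ => Subtype.ext (Equiv.ext fun x => x.elim0)⟩

theorem card_succ (n : ℕ) :
    Fintype.card (Cyclation (n + 1)) = (2 * n + 1) * Fintype.card (Cyclation n) := by
  rw [← Fintype.card_congr (Equiv.ofBijective _ (insertInterval_bijective n)), Fintype.card_prod,
    Fintype.card_option, Fintype.card_fin, mul_comm]

theorem card_pos (n : ℕ) : 0 < Fintype.card (Cyclation n) := by
  induction n with
  | zero => simp [card_zero]
  | succ n ih => rw [card_succ]; positivity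

end Cyclation

section OrbitMap

variable {α β P Q : Type*} {S : Set (Perm α)} {f : α → Q}

/-- `f` labels the orbits of the group generated by `S`: two points get the same label if and only
if they lie in the same orbit, and every label occurs. -/
structure IsOrbitMap (S : Set (Perm α)) (f : α → Q) : Prop where
  surjective : Function.Surjective f
  eq_iff_mem_orbit : ∀ x y, f x = f y ↔ x ∈ MulAction.orbit (Subgroup.closure S) y

theorem apply_eq_apply_of_mem_orbit_closure (hf : ∀ s ∈ S, f ∘ s = f) {x y : α}
    (h : x ∈ MulAction.orbit (Subgroup.closure S) y) : f x = f y := by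
  obtain ⟨⟨g, hg⟩, rfl⟩ := h
  change f (g y) = f y
  induction hg using Subgroup.closure_induction generalizing y with
  | mem s hs => exact congrFun (hf s hs) y
  | one => rfl
  | mul a b _ _ iha ihb => exact (iha (y := b y)).trans ihb
  | inv a _ ih => simpa using (ih (y := a⁻¹ y)).symm

theorem isOrbitMap_quotientMk (S : Set (Perm α)) :
    IsOrbitMap S (Quotient.mk (MulAction.orbitRel (Subgroup.closure S) α)) :=
  ⟨Quotient.mk_surjective, fun _ _ => Quotient.eq⟩

namespace IsOrbitMap

theorem comp_eq (hf : IsOrbitMap S f) : ∀ s ∈ S, f ∘ s = f := fun s hs => funext fun _ =>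
  (hf.eq_iff_mem_orbit _ _).2 ⟨⟨s, Subgroup.subset_closure hs⟩, rfl⟩

theorem apply_eq_of_comp_eq (hf : IsOrbitMap S f) {g : α → P} (hg : ∀ s ∈ S, g ∘ s = g) {x y : α}
    (h : f x = f y) : g x = g y :=
  apply_eq_apply_of_mem_orbit_closure hg ((hf.eq_iff_mem_orbit x y).1 h)

end IsOrbitMap

theorem isOrbitMap_of_universal
    (surj : Function.Surjective f) (hf : ∀ s ∈ S, f ∘ s = f)
    (univ : ∀ q : α → MulAction.orbitRel.Quotient (Subgroup.closure S) α,
      (∀ s ∈ S, q ∘ s = q) → ∀ x y, f x = f y → q x = q y) :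
    IsOrbitMap S f where
  surjective := surj
  eq_iff_mem_orbit x y := by
    refine ⟨fun h => ?_, apply_eq_apply_of_mem_orbit_closure hf⟩
    have hq := isOrbitMap_quotientMk S
    exact (hq.eq_iff_mem_orbit x y).1 (univ _ hq.comp_eq x y h)

theorem IsOrbitMap.permCongr (hf : IsOrbitMap S f) (e : α ≃ β) :
    IsOrbitMap (e.permCongr '' S) (f ∘ e.symm) := by
  refine isOrbitMap_of_universal (hf.surjective.comp e.symm.surjective) ?_ ?_
  · rintro _ ⟨s, hs, rfl⟩
    ext x
    simpa using congrFun (hf.comp_eq s hs) (e.symm x)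
  · intro q hq x y h
    have hqe : ∀ s ∈ S, (q ∘ e) ∘ s = q ∘ e := fun s hs => by
      ext x
      simpa using congrFun (hq _ ⟨s, hs, rfl⟩) (e x)
    simpa using hf.apply_eq_of_comp_eq hqe h

section InsertPair

variable {μ σ : Perm α}

theorem comp_sumCongr_swap_eq_iff {F : α ⊕ Fin 2 → Q} :
    F ∘ Perm.sumCongr μ (swap 0 1) = F ↔ (F ∘ inl) ∘ μ = F ∘ inl ∧ F (inr 0) = F (inr 1) := by
  simp only [funext_iff, Function.comp_apply, Perm.sumCongr_apply, Sum.forall, Fin.forall_fin_two,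
    Sum.map_inl, Sum.map_inr, swap_apply_left, swap_apply_right]
  grind

variable [DecidableEq α]

theorem comp_insertPair_eq_iff {F : α ⊕ Fin 2 → Q} {o : Option α}
    (h : F (inr 1) = F (pairPartner o)) :
    F ∘ insertPair μ o = F ↔ F ∘ Perm.sumCongr μ (swap 0 1) = F := by
  set τ : Perm (α ⊕ Fin 2) := swap (inr 1) (pairPartner o)
  have hτ : F ∘ τ = F := funext fun z => apply_swap_eq_self h z
  have hττ : ∀ z, τ (τ z) = z := τ.symm_apply_apply
  constructor <;> intro hF <;> funext z
  · calc F (Perm.sumCongr μ (swap 0 1) z) = F (τ (Perm.sumCongr μ (swap 0 1) (τ (τ z)))) := by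
          rw [hττ]; exact (congrFun hτ _).symm
      _ = F (τ z) := congrFun hF (τ z)
      _ = F z := congrFun hτ z
  · exact (congrFun hτ _).trans ((congrFun hF (τ z)).trans (congrFun hτ z))

theorem forall_comp_eq_insertPair_iff {F : α ⊕ Fin 2 → Q} {o : Option α} :
    (∀ s ∈ ({insertPair μ o, Perm.sumCongr σ (swap 0 1)} : Set (Perm (α ⊕ Fin 2))), F ∘ s = F) ↔
      (∀ s ∈ ({μ, σ} : Set (Perm α)), (F ∘ inl) ∘ s = F ∘ inl) ∧
        F (inr 0) = F (inr 1) ∧ F (inr 0) = F (pairPartner o) := by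
  simp only [Set.forall_mem_insert, Set.mem_singleton_iff, forall_eq]
  constructor
  · rintro ⟨hμ, hσ⟩
    have hpartner : F (inr 0) = F (pairPartner o) := by
      rw [← insertPair_inr_zero μ o]; exact (congrFun hμ _).symm
    obtain ⟨hσ', hinr⟩ := comp_sumCongr_swap_eq_iff.1 hσ
    have hμ' := (comp_insertPair_eq_iff (hinr.symm.trans hpartner)).1 hμ
    exact ⟨⟨(comp_sumCongr_swap_eq_iff.1 hμ').1, hσ'⟩, hinr, hpartner⟩
  · rintro ⟨⟨hμ, hσ⟩, hinr, hpartner⟩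
    exact ⟨(comp_insertPair_eq_iff (hinr.symm.trans hpartner)).2
      (comp_sumCongr_swap_eq_iff.2 ⟨hμ, hinr⟩), comp_sumCongr_swap_eq_iff.2 ⟨hσ, hinr⟩⟩

theorem IsOrbitMap.insertPair_some (hf : IsOrbitMap {μ, σ} f) (x : α) :
    IsOrbitMap {insertPair μ (some x), Perm.sumCongr σ (swap 0 1)}
      (Sum.elim f fun _ => f x) := by
  refine isOrbitMap_of_universal (fun t => ?_) ?_ fun q hq => ?_
  · exact (hf.surjective t).imp' inl fun _ h => h
  · exact forall_comp_eq_insertPair_iff.2 ⟨hf.comp_eq, rfl, rfl⟩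
  · obtain ⟨hinl, hinr, hx⟩ := forall_comp_eq_insertPair_iff.1 hq
    change q (inr 0) = q (inl x) at hx
    have hq' : ∀ z, q z = q (inl (Sum.elim id (fun _ => x) z)) :=
      Sum.forall.2 ⟨fun _ => rfl, Fin.forall_fin_two.2 ⟨hx, hinr.symm.trans hx⟩⟩
    have hf' : ∀ z, Sum.elim f (fun _ : Fin 2 => f x) z = f (Sum.elim id (fun _ => x) z) :=
      Sum.forall.2 ⟨fun _ => rfl, fun _ => rfl⟩
    intro y z h
    rw [hf', hf'] at h
    rw [hq', hq' z]
    exact hf.apply_eq_of_comp_eq hinl h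

theorem IsOrbitMap.insertPair_none (hf : IsOrbitMap {μ, σ} f) :
    IsOrbitMap {insertPair μ none, Perm.sumCongr σ (swap 0 1)}
      (Sum.elim (some ∘ f) fun _ => none) := by
  refine isOrbitMap_of_universal ?_ ?_ fun q hq => ?_
  · rintro (_ | t)
    · exact ⟨inr 0, rfl⟩
    · exact (hf.surjective t).imp' inl fun _ h => congrArg some h
  · refine forall_comp_eq_insertPair_iff.2 ⟨fun s hs => ?_, rfl, rfl⟩
    exact congrArg (some ∘ ·) (hf.comp_eq s hs)
  · obtain ⟨hinl, hinr, -⟩ := forall_comp_eq_insertPair_iff.1 hq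
    rintro (x | i) (y | j) h
    · exact hf.apply_eq_of_comp_eq hinl (Option.some_injective _ h)
    · cases h
    · cases h
    · fin_cases i <;> fin_cases j <;> simp [hinr]

end InsertPair

theorem ncard_preimage_sumElim [Finite α] [Finite β] (f : α → Q) (g : β → Q) (s : Set Q) :
    (Sum.elim f g ⁻¹' s).ncard = (f ⁻¹' s).ncard + (g ⁻¹' s).ncard := by
  rw [← Set.image_preimage_inl_union_image_preimage_inr (Sum.elim f g ⁻¹' s),
    Set.ncard_union_eq (Set.disjoint_image_inl_image_inr),
    Set.ncard_image_of_injective _ Sum.inl_injective,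
    Set.ncard_image_of_injective _ Sum.inr_injective]
  rfl

theorem ncard_preimage_comp_equiv (e : β ≃ α) (f : α → Q) (s : Set Q) :
    ((f ∘ e) ⁻¹' s).ncard = (f ⁻¹' s).ncard := by
  rw [Set.preimage_comp, ← e.image_symm_eq_preimage,
    Set.ncard_image_of_injective _ e.symm.injective]

end OrbitMap

theorem sum_comp_eq_sum_ncard_smul {α Q A : Type*} [Fintype α] [Fintype Q] [AddCommMonoid A]
    (f : α → Q) (g : Q → A) : ∑ x, g (f x) = ∑ t, (f ⁻¹' {t}).ncard • g t := by
  classical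
  rw [← Finset.sum_fiberwise' Finset.univ f g]
  refine Finset.sum_congr rfl fun t _ => ?_
  rw [Finset.sum_const, ← Set.ncard_coe_finset]
  congr 2
  ext x
  simp

namespace Cyclation

section CycleMap

variable {n : ℕ} {Q : Type*} {c : Cyclation n} {f : Fin (2 * n) → Q}

/-- `f` labels the cycles of `c`: two endpoints get the same label if and only if they lie on the
same cycle, and every label occurs. -/
abbrev IsCycleMap (c : Cyclation n) (f : Fin (2 * n) → Q) : Prop :=
  IsOrbitMap {c.1, intervalPerm n} f

/-- The labelling of `c.insertInterval none` induced by a labelling of `c`: the cycle made of the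
new interval gets the new label `none`. -/
def newCycleLabel (f : Fin (2 * n) → Q) : Fin (2 * (n + 1)) → Option Q :=
  Sum.elim (some ∘ f) (fun _ => none) ∘ (endpointEquiv n).symm

/-- The labelling of `c.insertInterval (some x)` induced by a labelling of `c`: the endpoints of
the new interval get the label of `x`. -/
def extendedCycleLabel (f : Fin (2 * n) → Q) (x : Fin (2 * n)) : Fin (2 * (n + 1)) → Q :=
  Sum.elim f (fun _ => f x) ∘ (endpointEquiv n).symm

theorem image_permCongr_endpointEquiv (c : Cyclation n) (o : Option (Fin (2 * n))) :
    (endpointEquiv n).permCongr '' {insertPair c.1 o, Perm.sumCongr (intervalPerm n) (swap 0 1)} =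
      {(c.insertInterval o).1, intervalPerm (n + 1)} := by
  rw [Set.image_pair, permCongr_endpointEquiv_sumCongr_intervalPerm]
  rfl

theorem IsCycleMap.insertInterval_none (hf : c.IsCycleMap f) :
    (c.insertInterval none).IsCycleMap (newCycleLabel f) := by
  rw [IsCycleMap, ← image_permCongr_endpointEquiv]
  exact hf.insertPair_none.permCongr _

theorem IsCycleMap.insertInterval_some (hf : c.IsCycleMap f) (x : Fin (2 * n)) :
    (c.insertInterval (some x)).IsCycleMap (extendedCycleLabel f x) := by
  rw [IsCycleMap, ← image_permCongr_endpointEquiv]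
  exact (hf.insertPair_some x).permCongr _

theorem ncard_newCycleLabel_some (f : Fin (2 * n) → Q) (t : Q) :
    (newCycleLabel f ⁻¹' {some t}).ncard = (f ⁻¹' {t}).ncard := by
  rw [newCycleLabel, ncard_preimage_comp_equiv, ncard_preimage_sumElim,
    Set.preimage_const_of_notMem (by simp), Set.ncard_empty, add_zero, Set.preimage_comp,
    ← Set.image_singleton, (Option.some_injective Q).preimage_image]

theorem ncard_newCycleLabel_none (f : Fin (2 * n) → Q) :
    (newCycleLabel f ⁻¹' {none}).ncard = 2 := by
  have hsome : some ∘ f ⁻¹' {none} = ∅ := by ext; simp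
  rw [newCycleLabel, ncard_preimage_comp_equiv, ncard_preimage_sumElim, hsome, Set.ncard_empty,
    Set.preimage_const_of_mem (Set.mem_singleton _), Set.ncard_univ, Nat.card_fin]

theorem ncard_extendedCycleLabel [DecidableEq Q] (f : Fin (2 * n) → Q) (x : Fin (2 * n)) (t : Q) :
    (extendedCycleLabel f x ⁻¹' {t}).ncard = (f ⁻¹' {t}).ncard + if f x = t then 2 else 0 := by
  rw [extendedCycleLabel, ncard_preimage_comp_equiv, ncard_preimage_sumElim]
  split_ifs with h
  · rw [Set.preimage_const_of_mem (Set.mem_singleton_iff.2 h), Set.ncard_univ, Nat.card_fin]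
  · rw [Set.preimage_const_of_notMem (mt Set.mem_singleton_iff.1 h), Set.ncard_empty]

theorem IsCycleMap.ncard_orbit (hf : c.IsCycleMap f) (x : Fin (2 * n)) :
    (MulAction.orbit (cycGroup c) x).ncard = (f ⁻¹' {f x}).ncard :=
  congrArg Set.ncard (Set.ext fun y => (hf.eq_iff_mem_orbit y x).symm)

theorem IsCycleMap.longestCycle_le_iff (hf : c.IsCycleMap f) {k : ℕ} :
    longestCycle c ≤ k ↔ ∀ t, (f ⁻¹' {t}).ncard / 2 ≤ k := by
  have half_le_iff (m : ℕ) : m / 2 ≤ k ↔ m ≤ 2 * k + 1 := by omega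
  simp only [longestCycle, half_le_iff, Finset.sup_le_iff, Finset.mem_univ, true_imp_iff,
    hf.ncard_orbit]
  exact (hf.surjective.forall (p := fun t => (f ⁻¹' {t}).ncard ≤ 2 * k + 1)).symm

/-- The set of cycles of `c`, as connected components. -/
abbrev Component (c : Cyclation n) : Type :=
  MulAction.orbitRel.Quotient (cycGroup c) (Fin (2 * n))

noncomputable instance (c : Cyclation n) : Fintype c.Component :=
  Fintype.ofFinite _

/-- The cycle of `c` through the endpoint `x`. -/
def component (c : Cyclation n) (x : Fin (2 * n)) : c.Component :=
  Quotient.mk _ x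

theorem isCycleMap_component (c : Cyclation n) : c.IsCycleMap c.component :=
  isOrbitMap_quotientMk _

theorem longestCycle_le (c : Cyclation n) : longestCycle c ≤ n := by
  refine c.isCycleMap_component.longestCycle_le_iff.2 fun t => ?_
  have := Set.ncard_le_card (c.component ⁻¹' {t})
  rw [Nat.card_fin] at this
  omega

end CycleMap

section Growth

variable {n : ℕ}

theorem longestCycle_le_insertInterval_none (c : Cyclation n) :
    longestCycle c ≤ longestCycle (c.insertInterval none) := by
  have hf := c.isCycleMap_component
  refine hf.longestCycle_le_iff.2 fun t => ?_
  rw [← ncard_newCycleLabel_some]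
  exact hf.insertInterval_none.longestCycle_le_iff.1 le_rfl _

theorem exists_longestCycle_le_ncard {c : Cyclation n} (h : longestCycle c ≠ 0) :
    ∃ t, 2 * longestCycle c ≤ (c.component ⁻¹' {t}).ncard := by
  by_contra! hlt
  have : longestCycle c ≤ longestCycle c - 1 :=
    c.isCycleMap_component.longestCycle_le_iff.2 fun t => by
      have := hlt t
      omega
  omega

theorem mul_longestCycle_le_sum_insertInterval_some (c : Cyclation n) :
    (2 * n + 2) * longestCycle c ≤ ∑ x, longestCycle (c.insertInterval (some x)) := by
  classical
  rcases eq_or_ne (longestCycle c) 0 with h | h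
  · simp [h]
  obtain ⟨t, ht⟩ := exists_longestCycle_le_ncard h
  have grow (x : Fin (2 * n)) : longestCycle c + (if c.component x = t then 1 else 0) ≤
      longestCycle (c.insertInterval (some x)) := by
    have hf := c.isCycleMap_component
    have hsome := (hf.insertInterval_some x).longestCycle_le_iff.1 le_rfl
    simp only [ncard_extendedCycleLabel] at hsome
    split_ifs with hx
    · have := hsome t
      rw [if_pos hx] at this
      omega
    · rw [add_zero]
      exact hf.longestCycle_le_iff.2 fun s =>
        (Nat.div_le_div_right (Nat.le_add_right _ _)).trans (hsome s)
  calc (2 * n + 2) * longestCycle c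
      ≤ 2 * n * longestCycle c + (c.component ⁻¹' {t}).ncard := by linarith
    _ = ∑ x, (longestCycle c + if c.component x = t then 1 else 0) := by
        rw [Finset.sum_add_distrib, sum_comp_eq_sum_ncard_smul c.component (if · = t then 1 else 0)]
        simp
    _ ≤ _ := Finset.sum_le_sum fun x _ => grow x

theorem mul_sum_longestCycle_le (n : ℕ) :
    (2 * n + 3) * ∑ c : Cyclation n, longestCycle c ≤ ∑ c : Cyclation (n + 1), longestCycle c := by
  rw [sum_succ, Finset.mul_sum]
  refine Finset.sum_le_sum fun c _ => ?_
  have h₀ := longestCycle_le_insertInterval_none c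
  have h₁ := mul_longestCycle_le_sum_insertInterval_some c
  linarith

end Growth

end Cyclation

end Insertion

/-! ### The cycle index -/

section CycleIndex

open Equiv Finset MvPolynomial
open Sum (inl inr)

theorem IsOrbitMap.exists_equiv {α P Q : Type*} {S : Set (Perm α)} {f : α → P} {g : α → Q}
    (hf : IsOrbitMap S f) (hg : IsOrbitMap S g) : ∃ e : P ≃ Q, ∀ x, e (f x) = g x := by
  have fg (x) : g (Function.surjInv hf.surjective (f x)) = g x :=
    hf.apply_eq_of_comp_eq hg.comp_eq (Function.surjInv_eq _ _)
  have gf (x) : f (Function.surjInv hg.surjective (g x)) = f x :=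
    hg.apply_eq_of_comp_eq hf.comp_eq (Function.surjInv_eq _ _)
  exact ⟨⟨fun t => g (Function.surjInv hf.surjective t),
    fun t => f (Function.surjInv hg.surjective t),
    hf.surjective.forall.2 fun x => by simp only [fg, gf],
    hg.surjective.forall.2 fun x => by simp only [fg, gf]⟩, fg⟩

theorem derivation_prod {R A ι : Type*} [CommSemiring R] [CommSemiring A] [Algebra R A]
    [DecidableEq ι] (D : Derivation R A A) (s : Finset ι) (a : ι → A) :
    D (∏ i ∈ s, a i) = ∑ i ∈ s, (∏ j ∈ s.erase i, a j) * D (a i) := by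
  induction s using Finset.induction_on with
  | empty => simp
  | insert i s hi ih =>
    rw [prod_insert hi, D.leibniz, ih, sum_insert hi, erase_insert hi, smul_eq_mul, smul_eq_mul,
      mul_sum, add_comm]
    congr 1
    refine sum_congr rfl fun j hj => ?_
    rw [erase_insert_of_ne (ne_of_mem_of_not_mem hj hi).symm, prod_insert (by simp [hi]), mul_assoc]

/-- The growth derivation of the cycle index: a cycle with `s` endpoints grows to one with `s + 2`
endpoints in `s` ways. -/
noncomputable def growthDerivation : Derivation ℝ (MvPolynomial ℕ ℝ) (MvPolynomial ℕ ℝ) :=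
  mkDerivation ℝ fun s => (s : MvPolynomial ℕ ℝ) * X (s + 2)

theorem growthDerivation_X (s : ℕ) :
    growthDerivation (X s) = (s : MvPolynomial ℕ ℝ) * X (s + 2) :=
  mkDerivation_X _ _ _

theorem growthDerivation_C_mul (a : ℝ) (p : MvPolynomial ℕ ℝ) :
    growthDerivation (C a * p) = C a * growthDerivation p := by
  rw [← smul_eq_C_mul, growthDerivation.map_smul, smul_eq_C_mul]

namespace Cyclation

variable {n : ℕ} {Q : Type*} [Fintype Q] {c : Cyclation n} {f : Fin (2 * n) → Q}

/-- The cycle type of `c` as a monomial, in which `X s` stands for a cycle with `s` endpoints,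
that is, of length `s / 2`. -/
noncomputable def cycleMonomial (c : Cyclation n) : MvPolynomial ℕ ℝ :=
  ∏ t : c.Component, X (c.component ⁻¹' {t}).ncard

theorem IsCycleMap.cycleMonomial_eq (hf : c.IsCycleMap f) :
    cycleMonomial c = ∏ t, X (f ⁻¹' {t}).ncard := by
  obtain ⟨e, he⟩ := c.isCycleMap_component.exists_equiv hf
  refine Fintype.prod_equiv e _ _ fun t => ?_
  congr 2
  ext x
  simp [← he]

theorem cycleMonomial_of_zero (c : Cyclation 0) : cycleMonomial c = 1 := by
  have : IsEmpty c.Component := ⟨fun t => t.inductionOn' fun x => x.elim0⟩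
  exact Fintype.prod_empty _

theorem cycleMonomial_insertInterval_none (c : Cyclation n) :
    cycleMonomial (c.insertInterval none) = X 2 * cycleMonomial c := by
  rw [c.isCycleMap_component.insertInterval_none.cycleMonomial_eq, Fintype.prod_option,
    ncard_newCycleLabel_none]
  simp only [ncard_newCycleLabel_some, cycleMonomial]

theorem sum_cycleMonomial_insertInterval_some (c : Cyclation n) :
    ∑ x, cycleMonomial (c.insertInterval (some x)) = growthDerivation (cycleMonomial c) := by
  classical
  let grown (t : c.Component) : MvPolynomial ℕ ℝ :=
    (∏ s ∈ univ.erase t, X (c.component ⁻¹' {s}).ncard) * X ((c.component ⁻¹' {t}).ncard + 2)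
  have grow (x : Fin (2 * n)) :
      cycleMonomial (c.insertInterval (some x)) = grown (c.component x) := by
    rw [(c.isCycleMap_component.insertInterval_some x).cycleMonomial_eq,
      ← prod_erase_mul _ _ (mem_univ (c.component x))]
    simp only [ncard_extendedCycleLabel, if_true]
    congr 1
    refine prod_congr rfl fun s hs => ?_
    rw [if_neg (ne_of_mem_erase hs).symm, add_zero]
  rw [sum_congr rfl fun x _ => grow x, sum_comp_eq_sum_ncard_smul c.component grown, cycleMonomial,
    derivation_prod]
  refine sum_congr rfl fun t _ => ?_
  rw [growthDerivation_X, nsmul_eq_mul]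
  ring

/-- The cycle index polynomial of the `n`-cyclations, normalised by `2 ^ n * n!`. -/
noncomputable def cycleIndex (n : ℕ) : MvPolynomial ℕ ℝ :=
  C (2 ^ n * n.factorial : ℝ)⁻¹ * ∑ c : Cyclation n, cycleMonomial c

theorem cycleIndex_zero : cycleIndex 0 = 1 := by
  simp [cycleIndex, cycleMonomial_of_zero, card_zero]

theorem add_one_mul_cycleIndex_succ (n : ℕ) :
    ((n : MvPolynomial ℕ ℝ) + 1) * cycleIndex (n + 1) =
      C 2⁻¹ * X 2 * cycleIndex n + (2⁻¹ : ℝ) • growthDerivation (cycleIndex n) := by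
  have scalar : ((n : MvPolynomial ℕ ℝ) + 1) * C (2 ^ (n + 1) * (n + 1).factorial : ℝ)⁻¹ =
      C 2⁻¹ * C (2 ^ n * n.factorial : ℝ)⁻¹ := by
    rw [← map_natCast (C (σ := ℕ) (R := ℝ)), ← C_1, ← C_add, ← C_mul, ← C_mul, Nat.factorial_succ]
    congr 1
    push_cast
    field_simp
    ring
  have total : ∑ c : Cyclation (n + 1), cycleMonomial c =
      X 2 * ∑ c : Cyclation n, cycleMonomial c +
        growthDerivation (∑ c : Cyclation n, cycleMonomial c) := by
    rw [sum_succ, sum_add_distrib, mul_sum, map_sum]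
    simp only [cycleMonomial_insertInterval_none, sum_cycleMonomial_insertInterval_some]
  rw [cycleIndex, ← mul_assoc, scalar, total, cycleIndex, growthDerivation_C_mul, smul_eq_C_mul]
  ring

end Cyclation

theorem add_one_mul_eq_sum_antidiagonal_of_derivation {R A : Type*} [CommSemiring R] [CommRing A]
    [NoZeroDivisors A] [CharZero A] [Algebra R A] (D : Derivation R A A) {x z : ℕ → A}
    (hx : ∀ l, D (x l) = (l + 1) * x (l + 1)) (hz₀ : D (z 0) = 0)
    (hz : ∀ n, (n + 1) * z (n + 1) = x 0 * z n + D (z n)) (n : ℕ) :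
    (n + 1) * z (n + 1) = ∑ p ∈ antidiagonal n, x p.1 * z p.2 := by
  induction n with
  | zero => simpa [hz₀] using hz 0
  | succ n ih =>
    have hD : D ((n + 1) * z (n + 1)) = (n + 1) * D (z (n + 1)) := by
      rw [D.leibniz, map_add, D.map_natCast, D.map_one_eq_zero]; simp
    refine mul_left_cancel₀ (Nat.cast_add_one_ne_zero (R := A) n) ?_
    calc (n + 1) * (((n + 1 : ℕ) + 1) * z (n + 1 + 1))
        = x 0 * ((n + 1) * z (n + 1)) + D ((n + 1) * z (n + 1)) := by rw [hz, hD]; ring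
      _ = ∑ p ∈ antidiagonal n, ((p.1 + 1) * (x (p.1 + 1) * z p.2) +
            (p.2 + 1) * (x p.1 * z (p.2 + 1))) := by
          rw [ih, map_sum, mul_sum, ← sum_add_distrib]
          refine sum_congr rfl fun p _ => ?_
          rw [D.leibniz, hx, smul_eq_mul, smul_eq_mul]
          linear_combination -x p.1 * hz p.2
      _ = ∑ p ∈ antidiagonal (n + 1), (p.1 * (x p.1 * z p.2) + p.2 * (x p.1 * z p.2)) := by
          rw [sum_add_distrib, sum_add_distrib, Finset.Nat.sum_antidiagonal_succ,
            Finset.Nat.sum_antidiagonal_succ' (f := fun p : ℕ × ℕ => (p.2 : A) * (x p.1 * z p.2))]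
          simp
      _ = (n + 1) * ∑ p ∈ antidiagonal (n + 1), x p.1 * z p.2 := by
          rw [mul_sum]
          refine sum_congr rfl fun p hp => ?_
          rw [← add_mul, ← Nat.cast_add, mem_antidiagonal.1 hp, Nat.cast_succ]

namespace Cyclation

theorem add_one_mul_cycleIndex_succ_eq_sum (n : ℕ) :
    ((n : MvPolynomial ℕ ℝ) + 1) * cycleIndex (n + 1) =
      ∑ p ∈ antidiagonal n, C 2⁻¹ * X (2 * (p.1 + 1)) * cycleIndex p.2 := by
  refine add_one_mul_eq_sum_antidiagonal_of_derivation ((2⁻¹ : ℝ) • growthDerivation)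
    (x := fun l => C 2⁻¹ * X (2 * (l + 1))) (fun l => ?_) ?_ add_one_mul_cycleIndex_succ n
  · have half_two : (C 2⁻¹ : MvPolynomial ℕ ℝ) * 2 = 1 := by
      rw [← map_ofNat C 2, ← C_mul]; norm_num
    rw [Derivation.smul_apply, growthDerivation_C_mul, growthDerivation_X, smul_eq_C_mul]
    push_cast
    linear_combination C 2⁻¹ * (l + 1) * X (2 * (l + 1 + 1)) * half_two
  · rw [cycleIndex_zero, Derivation.map_one_eq_zero]

end Cyclation

theorem hasSum_ite_lt (m : ℕ) : HasSum (fun k => if k < m then (1 : ℝ) else 0) m := by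
  have := hasSum_sum_of_ne_finset_zero (L := .unconditional ℕ) (s := range m)
    (f := fun k => if k < m then (1 : ℝ) else 0) fun k hk => if_neg (by simpa using hk)
  rwa [sum_congr rfl fun k hk => if_pos (mem_range.1 hk), sum_const, card_range, nsmul_one] at this

namespace Cyclation

/-- The coefficient of `x ^ n` in the generating function of all cyclations, in which an
`n`-cyclation has weight `x ^ n / (2 ^ n * n!)`. -/
noncomputable def coeff (n : ℕ) : ℝ :=
  Fintype.card (Cyclation n) / (2 ^ n * n.factorial)

open Classical in
/-- The coefficient of `x ^ n` in the generating function of the cyclations whose cycles all have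
length at most `k`. -/
noncomputable def coeffLE (k n : ℕ) : ℝ :=
  #{c : Cyclation n | longestCycle c ≤ k} / (2 ^ n * n.factorial)

theorem eval_cycleIndex (v : ℕ → ℝ) (n : ℕ) :
    eval v (cycleIndex n) =
      (∑ c : Cyclation n, eval v (cycleMonomial c)) / (2 ^ n * n.factorial) := by
  rw [cycleIndex, map_mul, eval_C, map_sum, div_eq_inv_mul]

theorem eval_cycleIndex_one (n : ℕ) : eval (fun _ => 1) (cycleIndex n) = coeff n := by
  rw [eval_cycleIndex, coeff]
  simp [cycleMonomial]

theorem eval_cycleMonomial_le {n : ℕ} (k : ℕ) (c : Cyclation n) :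
    eval (fun s => if s / 2 ≤ k then 1 else 0) (cycleMonomial c) =
      if longestCycle c ≤ k then (1 : ℝ) else 0 := by
  simp only [cycleMonomial, map_prod, eval_X, c.isCycleMap_component.longestCycle_le_iff]
  split_ifs with h
  · exact prod_eq_one fun t _ => if_pos (h t)
  · obtain ⟨t, ht⟩ := not_forall.1 h
    exact prod_eq_zero (mem_univ t) (if_neg ht)

theorem eval_cycleIndex_le (k n : ℕ) :
    eval (fun s => if s / 2 ≤ k then 1 else 0) (cycleIndex n) = coeffLE k n := by
  simp only [eval_cycleIndex, eval_cycleMonomial_le, coeffLE, sum_boole]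

theorem add_one_mul_coeff_succ_eq_sum (n : ℕ) :
    (n + 1) * coeff (n + 1) = ∑ p ∈ antidiagonal n, 2⁻¹ * coeff p.2 := by
  have := congrArg (eval fun _ => 1) (add_one_mul_cycleIndex_succ_eq_sum n)
  simpa [eval_cycleIndex_one] using this

theorem add_one_mul_coeffLE_succ_eq_sum (k n : ℕ) :
    (n + 1) * coeffLE k (n + 1) =
      ∑ p ∈ antidiagonal n, (if p.1 < k then 2⁻¹ else 0) * coeffLE k p.2 := by
  have := congrArg (eval fun s => if s / 2 ≤ k then 1 else 0) (add_one_mul_cycleIndex_succ_eq_sum n)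
  simpa [eval_cycleIndex_le, Nat.succ_le_iff] using this

theorem coeff_zero : coeff 0 = 1 := by
  rw [← eval_cycleIndex_one, cycleIndex_zero, map_one]

theorem coeffLE_zero (k : ℕ) : coeffLE k 0 = 1 := by
  rw [← eval_cycleIndex_le, cycleIndex_zero, map_one]

theorem coeff_succ (n : ℕ) : 2 * (n + 1) * coeff (n + 1) = (2 * n + 1) * coeff n := by
  rw [coeff, coeff, card_succ, Nat.factorial_succ]
  push_cast
  field_simp
  ring

theorem coeff_pos (n : ℕ) : 0 < coeff n :=
  div_pos (Nat.cast_pos.2 (card_pos n)) (by positivity)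

theorem coeff_le_one (n : ℕ) : coeff n ≤ 1 := by
  induction n with
  | zero => rw [coeff_zero]
  | succ n ih => nlinarith [coeff_succ n, coeff_pos n, coeff_pos (n + 1)]

theorem coeffLE_nonneg (k n : ℕ) : 0 ≤ coeffLE k n := by
  rw [coeffLE]
  positivity

theorem coeffLE_le_coeff (k n : ℕ) : coeffLE k n ≤ coeff n := by
  rw [coeffLE, coeff]
  gcongr
  exact card_le_univ _

theorem coeffLE_le_one (k n : ℕ) : coeffLE k n ≤ 1 :=
  (coeffLE_le_coeff k n).trans (coeff_le_one n)

theorem hasSum_coeff_sub_coeffLE (n : ℕ) :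
    HasSum (fun k => coeff n - coeffLE k n) (coeff n * ExM n) := by
  classical
  have tail (k : ℕ) : coeff n - coeffLE k n =
      (∑ c : Cyclation n, if k < longestCycle c then 1 else 0) / (2 ^ n * n.factorial) := by
    simp only [coeff, coeffLE, ← sub_div, sum_boole, ← not_le, ← card_univ (α := Cyclation n)]
    rw [← card_filter_add_card_filter_not (fun c : Cyclation n => longestCycle c ≤ k)]
    push_cast
    ring
  have expectation :
      coeff n * ExM n = (∑ c : Cyclation n, (longestCycle c : ℝ)) / (2 ^ n * n.factorial) := by
    have := card_pos n
    rw [coeff, ExM]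
    field_simp
  simp only [tail, expectation]
  exact (hasSum_sum fun c _ => hasSum_ite_lt (longestCycle c)).div_const _

/-- `Ex[M_n]` over `2 * n + 1`; unlike `Ex[M_n] / n`, this sequence is monotone. -/
noncomputable def meanRatio (n : ℕ) : ℝ :=
  ExM n / (2 * n + 1)

theorem meanRatio_monotone : Monotone meanRatio := by
  refine monotone_nat_of_le_succ fun n => ?_
  have grow : (2 * n + 3 : ℝ) * ∑ c : Cyclation n, (longestCycle c : ℝ) ≤
      ∑ c : Cyclation (n + 1), (longestCycle c : ℝ) := by
    exact_mod_cast mul_sum_longestCycle_le n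
  have := card_pos n
  rw [meanRatio, meanRatio, ExM, ExM, card_succ]
  push_cast
  rw [div_div, div_div, div_le_div_iff₀ (by positivity) (by positivity)]
  calc _ = ((2 * n + 3 : ℝ) * ∑ c : Cyclation n, (longestCycle c : ℝ)) *
        ((2 * n + 1) * Fintype.card (Cyclation n)) := by ring
    _ ≤ _ := by
        rw [mul_comm (Fintype.card (Cyclation n) : ℝ)]
        gcongr

theorem meanRatio_nonneg (n : ℕ) : 0 ≤ meanRatio n := by
  rw [meanRatio, ExM]
  positivity

theorem meanRatio_le_one (n : ℕ) : meanRatio n ≤ 1 := by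
  have := card_pos n
  rw [meanRatio, ExM, div_div, div_le_one (by positivity)]
  calc (∑ c : Cyclation n, (longestCycle c : ℝ)) ≤ ∑ _c : Cyclation n, (2 * n + 1 : ℝ) :=
        sum_le_sum fun c _ => by
          have : (longestCycle c : ℝ) ≤ n := Nat.cast_le.2 (longestCycle_le c)
          linarith [n.cast_nonneg (α := ℝ)]
    _ = Fintype.card (Cyclation n) * (2 * n + 1) := by rw [sum_const, card_univ, nsmul_eq_mul]

end Cyclation

end CycleIndex

/-! ### Generating functions -/

section GeneratingFunctions

open Finset Filter Topology

theorem summable_norm_mul_pow_of_abs_le_one {a : ℕ → ℝ} (ha : ∀ n, |a n| ≤ 1) {x : ℝ}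
    (hx : |x| < 1) : Summable fun n => ‖a n * x ^ n‖ := by
  refine .of_nonneg_of_le (fun _ => norm_nonneg _) (fun n => ?_)
    (summable_geometric_of_lt_one (abs_nonneg x) hx)
  rw [Real.norm_eq_abs, abs_mul, abs_pow]
  exact mul_le_of_le_one_left (by positivity) (ha n)

theorem hasDerivAt_tsum_pow_succ_div {a : ℕ → ℝ}
    (ha : ∀ x : ℝ, |x| < 1 → Summable fun n => ‖a n * x ^ n‖) {x : ℝ} (hx : |x| < 1) :
    HasDerivAt (fun y => ∑' n : ℕ, a n * y ^ (n + 1) / (n + 1)) (∑' n, a n * x ^ n) x := by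
  obtain ⟨r, hxr, hr⟩ := exists_between hx
  have hr0 : 0 ≤ r := (abs_nonneg x).trans hxr.le
  refine hasDerivAt_tsum_of_isPreconnected (g := fun n y => a n * y ^ (n + 1) / (n + 1))
    (g' := fun n y => a n * y ^ n) (t := Set.Ioo (-r) r) (y₀ := 0)
    (ha r (by rwa [abs_of_nonneg hr0])) isOpen_Ioo isPreconnected_Ioo (fun n y _ => ?_)
    (fun n y hy => ?_) (by simpa using (abs_nonneg x).trans_lt hxr) ?_ (abs_lt.1 hxr)
  · convert! ((hasDerivAt_pow (n + 1) y).const_mul (a n)).div_const ((n : ℝ) + 1) using 1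
    rw [Nat.add_sub_cancel]
    push_cast
    field_simp
  · rw [norm_mul, norm_mul, norm_pow, norm_pow, Real.norm_eq_abs y, Real.norm_of_nonneg hr0]
    gcongr
    exact (abs_lt.2 hy).le
  · exact summable_zero.congr fun n => by simp

theorem hasDerivAt_tsum_pow_of_add_one_mul_succ {b d : ℕ → ℝ}
    (hb : ∀ n, (n + 1) * b (n + 1) = d n)
    (hbs : ∀ x : ℝ, |x| < 1 → Summable fun n => ‖b n * x ^ n‖)
    (hds : ∀ x : ℝ, |x| < 1 → Summable fun n => ‖d n * x ^ n‖) {x : ℝ} (hx : |x| < 1) :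
    HasDerivAt (fun y => ∑' n, b n * y ^ n) (∑' n, d n * x ^ n) x := by
  refine ((hasDerivAt_tsum_pow_succ_div hds hx).const_add (b 0)).congr_of_eventuallyEq ?_
  filter_upwards [continuous_abs.continuousAt.eventually_lt_const hx] with y hy
  rw [(hbs y hy).of_norm.tsum_eq_zero_add, pow_zero, mul_one]
  congr 1
  refine tsum_congr fun n => ?_
  rw [← hb]
  field_simp

theorem sum_antidiagonal_mul_mul_pow (a b : ℕ → ℝ) (x : ℝ) (n : ℕ) :
    (∑ p ∈ antidiagonal n, a p.1 * b p.2) * x ^ n =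
      ∑ p ∈ antidiagonal n, a p.1 * x ^ p.1 * (b p.2 * x ^ p.2) := by
  rw [sum_mul]
  refine sum_congr rfl fun p hp => ?_
  rw [← mem_antidiagonal.1 hp, pow_add]
  ring

theorem summable_norm_sum_antidiagonal_mul_pow {a b : ℕ → ℝ} {x : ℝ}
    (ha : Summable fun n => ‖a n * x ^ n‖) (hb : Summable fun n => ‖b n * x ^ n‖) :
    Summable fun n => ‖(∑ p ∈ antidiagonal n, a p.1 * b p.2) * x ^ n‖ := by
  simpa only [sum_antidiagonal_mul_mul_pow] using
    summable_norm_sum_mul_antidiagonal_of_summable_norm ha hb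

theorem hasSum_sum_antidiagonal_mul_pow {a b : ℕ → ℝ} {x : ℝ}
    (ha : Summable fun n => ‖a n * x ^ n‖) (hb : Summable fun n => ‖b n * x ^ n‖) :
    HasSum (fun n => (∑ p ∈ antidiagonal n, a p.1 * b p.2) * x ^ n)
      ((∑' n, a n * x ^ n) * ∑' n, b n * x ^ n) := by
  simp only [tsum_mul_tsum_eq_tsum_sum_antidiagonal_of_summable_norm ha hb,
    ← sum_antidiagonal_mul_mul_pow a b x]
  exact (summable_norm_sum_antidiagonal_mul_pow ha hb).of_norm.hasSum

/-- The exponential formula: the recurrence is the equation `B' = a * B` of power series. -/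
theorem tsum_eq_mul_exp_of_add_one_mul_succ {a b : ℕ → ℝ}
    (ha : ∀ x : ℝ, |x| < 1 → Summable fun n => ‖a n * x ^ n‖)
    (hb : ∀ x : ℝ, |x| < 1 → Summable fun n => ‖b n * x ^ n‖)
    (hrec : ∀ n : ℕ, (n + 1) * b (n + 1) = ∑ p ∈ antidiagonal n, a p.1 * b p.2)
    {x : ℝ} (hx : |x| < 1) :
    ∑' n, b n * x ^ n = b 0 * Real.exp (∑' n : ℕ, a n * x ^ (n + 1) / (n + 1)) := by
  let A (y : ℝ) : ℝ := ∑' n : ℕ, a n * y ^ (n + 1) / (n + 1)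
  let B (y : ℝ) : ℝ := ∑' n, b n * y ^ n
  have deriv_B {y : ℝ} (hy : |y| < 1) : HasDerivAt B ((∑' n, a n * y ^ n) * B y) y := by
    rw [← (hasSum_sum_antidiagonal_mul_pow (ha y hy) (hb y hy)).tsum_eq]
    exact hasDerivAt_tsum_pow_of_add_one_mul_succ hrec hb
      (fun z hz => summable_norm_sum_antidiagonal_mul_pow (ha z hz) (hb z hz)) hy
  have deriv_B_mul_exp (y : ℝ) (hy : y ∈ Set.Ioo (-1 : ℝ) 1) :
      HasDerivAt (fun y => B y * Real.exp (-A y)) 0 y := by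
    convert! (deriv_B (abs_lt.2 hy)).mul (hasDerivAt_tsum_pow_succ_div ha (abs_lt.2 hy)).neg.exp
      using 1
    rw [Pi.neg_apply]
    ring
  have constant := isOpen_Ioo.is_const_of_deriv_eq_zero isPreconnected_Ioo
    (fun y hy => (deriv_B_mul_exp y hy).differentiableAt.differentiableWithinAt)
    (fun y hy => (deriv_B_mul_exp y hy).deriv) (abs_lt.1 hx) (show (0 : ℝ) ∈ Set.Ioo (-1) 1 by simp)
  have A_zero : A 0 = 0 := by simp [A]
  have B_zero : B 0 = b 0 := by
    rw [show B 0 = ∑' n, b n * 0 ^ n from rfl, tsum_eq_single 0 fun n hn => by simp [hn]]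
    simp
  rwa [A_zero, B_zero, neg_zero, Real.exp_zero, mul_one, Real.exp_neg, ← div_eq_mul_inv,
    div_eq_iff (Real.exp_ne_zero _)] at constant

theorem hasSum_of_hasSum_swap_of_nonneg {ι κ : Type*} {f : ι → κ → ℝ} (hf : ∀ i j, 0 ≤ f i j)
    {r : ι → ℝ} {c : κ → ℝ} (hr : ∀ i, HasSum (f i) (r i)) (hc : ∀ j, HasSum (f · j) (c j))
    {s : ℝ} (hs : HasSum r s) : HasSum c s := by
  have summable : Summable fun p : ι × κ => f p.1 p.2 := by
    refine (summable_prod_of_nonneg fun p => hf p.1 p.2).2 ⟨fun i => (hr i).summable, ?_⟩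
    exact hs.summable.congr fun i => (hr i).tsum_eq.symm
  rw [hs.unique (summable.hasSum.prod_fiberwise hr)]
  exact ((Equiv.prodComm κ ι).hasSum_iff.2 summable.hasSum).prod_fiberwise hc

section Toeplitz

variable {ι : Type*} {l : Filter ι} {p : ι → ℕ → ℝ} (p_nonneg : ∀ᶠ i in l, ∀ n, 0 ≤ p i n)
  (p_sum : ∀ᶠ i in l, HasSum (p i) 1) (p_tendsto : ∀ n, Tendsto (p · n) l (𝓝 0))
include p_nonneg p_sum p_tendsto

theorem tendsto_tsum_mul_zero_of_tendsto_zero {c : ℕ → ℝ} (hc : Tendsto c atTop (𝓝 0)) :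
    Tendsto (fun i => ∑' n, p i n * c n) l (𝓝 0) := by
  refine Metric.tendsto_nhds.2 fun ε hε => ?_
  obtain ⟨N, hN⟩ := Metric.tendsto_atTop.1 hc (ε / 2) (half_pos hε)
  have head : Tendsto (fun i => ∑ n ∈ range N, p i n * |c n|) l (𝓝 0) := by
    simpa using tendsto_finsetSum (range N) fun n _ => (p_tendsto n).mul_const |c n|
  filter_upwards [p_nonneg, p_sum, head.eventually_lt_const (half_pos hε)] with i hi0 hi1 hi
  have bound (n : ℕ) : ‖p i n * c n‖ ≤
      (if n ∈ range N then p i n * |c n| else 0) + p i n * (ε / 2) := by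
    have := hi0 n
    rw [norm_mul, Real.norm_of_nonneg this, Real.norm_eq_abs]
    split_ifs with h
    · exact le_add_of_nonneg_right (by positivity)
    · rw [zero_add]
      gcongr
      simpa using (hN n (by simpa using h)).le
  have sum_bound := (hasSum_sum_of_ne_finset_zero (L := .unconditional ℕ) (s := range N)
    (f := fun n => if n ∈ range N then p i n * |c n| else 0) fun n hn => if_neg hn).add
      (hi1.mul_right (ε / 2))
  rw [sum_congr rfl fun n hn => if_pos hn] at sum_bound
  rw [dist_zero_right]
  linarith [tsum_of_norm_bounded sum_bound bound]

theorem tendsto_tsum_mul_of_tendsto {b : ℕ → ℝ} {L : ℝ} (hb : Tendsto b atTop (𝓝 L)) :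
    Tendsto (fun i => ∑' n, p i n * b n) l (𝓝 L) := by
  have centred := tendsto_tsum_mul_zero_of_tendsto_zero p_nonneg p_sum p_tendsto
    (tendsto_sub_nhds_zero_iff.2 hb)
  refine (zero_add L ▸ centred.add_const L).congr' ?_
  filter_upwards [p_nonneg, p_sum] with i hi0 hi1
  have summable : Summable fun n => p i n * b n :=
    Summable.mul_tendsto_const (by simpa only [Real.norm_of_nonneg (hi0 _)] using hi1.summable)
      (Nat.cofinite_eq_atTop ▸ hb)
  simp only [mul_sub]
  rw [summable.tsum_sub (hi1.summable.mul_right L), tsum_mul_right, hi1.tsum_eq]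
  ring

end Toeplitz

/-- The tail `∑_{j > k} x ^ j / j` of the series of `-log (1 - x)`. -/
noncomputable def logTail (k : ℕ) (x : ℝ) : ℝ :=
  ∑' j : ℕ, x ^ (j + k + 1) / ((j + k : ℕ) + 1)

theorem sum_range_add_logTail (k : ℕ) {x : ℝ} (hx : |x| < 1) :
    ∑ l ∈ range k, x ^ (l + 1) / ((l : ℝ) + 1) + logTail k x =
      ∑' l : ℕ, x ^ (l + 1) / ((l : ℝ) + 1) :=
  (Real.hasSum_pow_div_log_of_abs_lt_one hx).summable.sum_add_tsum_nat_add k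

namespace Cyclation

/-- The generating function `(1 - x) ^ (-1 / 2)` of all cyclations. -/
noncomputable def genFun (x : ℝ) : ℝ :=
  ∑' n, coeff n * x ^ n

theorem summable_norm_coeff_mul_pow {x : ℝ} (hx : |x| < 1) :
    Summable fun n => ‖coeff n * x ^ n‖ :=
  summable_norm_mul_pow_of_abs_le_one
    (fun n => (abs_of_pos (coeff_pos n)).trans_le (coeff_le_one n)) hx

theorem summable_norm_coeffLE_mul_pow (k : ℕ) {x : ℝ} (hx : |x| < 1) :
    Summable fun n => ‖coeffLE k n * x ^ n‖ :=
  summable_norm_mul_pow_of_abs_le_one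
    (fun n => (abs_of_nonneg (coeffLE_nonneg k n)).trans_le (coeffLE_le_one k n)) hx

theorem genFun_eq_exp {x : ℝ} (hx : |x| < 1) :
    genFun x = Real.exp (2⁻¹ * ∑' n : ℕ, x ^ (n + 1) / (n + 1)) := by
  have := tsum_eq_mul_exp_of_add_one_mul_succ
    (fun x hx => summable_norm_mul_pow_of_abs_le_one (a := fun _ => 2⁻¹) (by norm_num) hx)
    (fun _ => summable_norm_coeff_mul_pow) add_one_mul_coeff_succ_eq_sum hx
  simp only [mul_div_assoc, tsum_mul_left] at this
  rw [genFun, this, coeff_zero, one_mul]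

theorem tsum_coeffLE_mul_pow (k : ℕ) {x : ℝ} (hx : |x| < 1) :
    ∑' n, coeffLE k n * x ^ n = genFun x * Real.exp (-logTail k x / 2) := by
  have := tsum_eq_mul_exp_of_add_one_mul_succ
    (fun x hx => summable_norm_mul_pow_of_abs_le_one (a := fun l => if l < k then 2⁻¹ else 0)
      (fun l => by split_ifs <;> norm_num) hx)
    (fun _ => summable_norm_coeffLE_mul_pow k) (add_one_mul_coeffLE_succ_eq_sum k) hx
  rw [this, coeffLE_zero, one_mul, genFun_eq_exp hx, ← Real.exp_add,
    tsum_eq_sum (s := range k) fun l hl => by simp [if_neg (mt mem_range.2 hl)],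
    sum_congr rfl fun l hl => by rw [if_pos (mem_range.1 hl), mul_div_assoc], ← mul_sum,
    ← sum_range_add_logTail k hx]
  ring_nf

theorem one_le_genFun {x : ℝ} (hx0 : 0 ≤ x) (hx1 : x < 1) : 1 ≤ genFun x := by
  rw [genFun_eq_exp (by rwa [abs_of_nonneg hx0])]
  exact Real.one_le_exp (mul_nonneg (by norm_num) (tsum_nonneg fun n => by positivity))

theorem two_mul_add_one_mul_coeff_eq_sum (n : ℕ) :
    (2 * n + 1) * coeff n = ∑ p ∈ antidiagonal n, coeff p.2 := by
  rw [← coeff_succ, mul_assoc, add_one_mul_coeff_succ_eq_sum, ← mul_sum,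
    mul_inv_cancel_left₀ two_ne_zero]

theorem hasSum_two_mul_add_one_mul_coeff_mul_pow {x : ℝ} (hx : |x| < 1) :
    HasSum (fun n : ℕ => (2 * n + 1) * coeff n * x ^ n) ((1 - x)⁻¹ * genFun x) := by
  have := hasSum_sum_antidiagonal_mul_pow
    (summable_norm_mul_pow_of_abs_le_one (a := fun _ => 1) (by norm_num) hx)
    (summable_norm_coeff_mul_pow hx)
  rw [← genFun] at this
  simpa only [one_mul, ← two_mul_add_one_mul_coeff_eq_sum,
    tsum_geometric_of_abs_lt_one hx] using this

/-- Probability weights on `ℕ` that move off to infinity as `x → 1`. With respect to them the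
average of `meanRatio` is explicit. -/
noncomputable def abelWeight (x : ℝ) (n : ℕ) : ℝ :=
  (1 - x) / genFun x * ((2 * n + 1) * coeff n * x ^ n)

theorem abelWeight_nonneg {x : ℝ} (hx0 : 0 ≤ x) (hx1 : x < 1) (n : ℕ) : 0 ≤ abelWeight x n := by
  have := one_le_genFun hx0 hx1
  have := coeff_pos n
  have := sub_pos.2 hx1
  rw [abelWeight]
  positivity

theorem hasSum_abelWeight {x : ℝ} (hx0 : 0 ≤ x) (hx1 : x < 1) : HasSum (abelWeight x) 1 := by
  have : genFun x ≠ 0 := (zero_lt_one.trans_le (one_le_genFun hx0 hx1)).ne'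
  have : 1 - x ≠ 0 := (sub_pos.2 hx1).ne'
  convert! (hasSum_two_mul_add_one_mul_coeff_mul_pow (x := x)
    (by rwa [abs_of_nonneg hx0])).mul_left ((1 - x) / genFun x) using 1
  field_simp

theorem abelWeight_le {x : ℝ} (hx0 : 0 ≤ x) (hx1 : x < 1) (n : ℕ) :
    abelWeight x n ≤ (1 - x) * (2 * n + 1) := by
  have := coeff_pos n
  have := sub_pos.2 hx1
  calc abelWeight x n ≤ (1 - x) / 1 * ((2 * n + 1) * 1 * 1) := by
        rw [abelWeight]
        gcongr
        exacts [one_le_genFun hx0 hx1, coeff_le_one n, pow_le_one₀ hx0 hx1.le]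
    _ = _ := by ring

theorem eventually_nonneg_and_lt_one : ∀ᶠ x : ℝ in 𝓝[<] 1, 0 ≤ x ∧ x < 1 := by
  filter_upwards [Ioo_mem_nhdsLT zero_lt_one] with x hx using ⟨hx.1.le, hx.2⟩

theorem tendsto_abelWeight (n : ℕ) : Tendsto (abelWeight · n) (𝓝[<] 1) (𝓝 0) := by
  have upper : Tendsto (fun x : ℝ => (1 - x) * (2 * n + 1)) (𝓝[<] 1) (𝓝 0) := by
    have : Continuous fun x : ℝ => (1 - x) * (2 * n + 1) := by fun_prop
    simpa using (this.tendsto 1).mono_left nhdsWithin_le_nhds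
  refine tendsto_of_tendsto_of_tendsto_of_le_of_le' tendsto_const_nhds upper ?_ ?_
  · filter_upwards [eventually_nonneg_and_lt_one] with x hx using abelWeight_nonneg hx.1 hx.2 n
  · filter_upwards [eventually_nonneg_and_lt_one] with x hx using abelWeight_le hx.1 hx.2 n

theorem hasSum_coeff_sub_coeffLE_mul_pow (k : ℕ) {x : ℝ} (hx : |x| < 1) :
    HasSum (fun n => (coeff n - coeffLE k n) * x ^ n)
      (genFun x * (1 - Real.exp (-logTail k x / 2))) := by
  convert! (summable_norm_coeff_mul_pow hx).of_norm.hasSum.sub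
    (summable_norm_coeffLE_mul_pow k hx).of_norm.hasSum using 1
  · simp only [sub_mul]
  · rw [tsum_coeffLE_mul_pow k hx, ← genFun]
    ring

theorem hasSum_one_sub_exp_logTail {x : ℝ} (hx0 : 0 ≤ x) (hx1 : x < 1) :
    HasSum (fun k => (1 - x) * (1 - Real.exp (-logTail k x / 2)))
      (∑' n, abelWeight x n * meanRatio n) := by
  have genFun_ne : genFun x ≠ 0 := (zero_lt_one.trans_le (one_le_genFun hx0 hx1)).ne'
  have summable : Summable fun n => abelWeight x n * meanRatio n := by
    refine .of_nonneg_of_le (fun n => ?_) (fun n => ?_) (hasSum_abelWeight hx0 hx1).summable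
    · exact mul_nonneg (abelWeight_nonneg hx0 hx1 n) (meanRatio_nonneg n)
    · exact mul_le_of_le_one_right (abelWeight_nonneg hx0 hx1 n) (meanRatio_le_one n)
  refine hasSum_of_hasSum_swap_of_nonneg
    (f := fun n k => (1 - x) / genFun x * ((coeff n - coeffLE k n) * x ^ n)) (fun n k => ?_)
    (fun n => ?_) (fun k => ?_) summable.hasSum
  · have := one_le_genFun hx0 hx1
    have := sub_pos.2 hx1
    have := sub_nonneg.2 (coeffLE_le_coeff k n)
    positivity
  · convert! ((hasSum_coeff_sub_coeffLE n).mul_right (x ^ n)).mul_left ((1 - x) / genFun x) using 1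
    rw [abelWeight, meanRatio]
    field_simp
  · convert! (hasSum_coeff_sub_coeffLE_mul_pow k (x := x)
      (by rwa [abs_of_nonneg hx0])).mul_left ((1 - x) / genFun x) using 1
    field_simp

theorem exists_tendsto_meanRatio : ∃ L, Tendsto meanRatio atTop (𝓝 L) :=
  ⟨_, tendsto_atTop_ciSup meanRatio_monotone ⟨1, Set.forall_mem_range.2 meanRatio_le_one⟩⟩

theorem tendsto_tsum_one_sub_exp_logTail {L : ℝ} (hL : Tendsto meanRatio atTop (𝓝 L)) :
    Tendsto (fun x => ∑' k, (1 - x) * (1 - Real.exp (-logTail k x / 2))) (𝓝[<] 1) (𝓝 L) := by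
  refine (tendsto_tsum_mul_of_tendsto (p := abelWeight) ?_ ?_ tendsto_abelWeight hL).congr' ?_
  · filter_upwards [eventually_nonneg_and_lt_one] with x hx using abelWeight_nonneg hx.1 hx.2
  · filter_upwards [eventually_nonneg_and_lt_one] with x hx using hasSum_abelWeight hx.1 hx.2
  · filter_upwards [eventually_nonneg_and_lt_one] with x hx
    exact (hasSum_one_sub_exp_logTail hx.1 hx.2).tsum_eq.symm

end Cyclation

end GeneratingFunctions

/-! ### The scaling limit -/

section ScalingLimit

open Filter MeasureTheory Set Topology

section RiemannSums

variable {f : ℝ → ℝ} {s : ℝ}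

section Mesh

variable {N : ℕ} (hs : 0 < s) (anti : AntitoneOn f (Ici (s * N)))
  (integrable : IntegrableOn f (Ioi (s * N)))
include hs

theorem antitoneOn_comp_mul_left (anti : AntitoneOn f (Ici (s * N))) :
    AntitoneOn (fun x => f (s * x)) (Ici N) :=
  fun _ hx _ hy hxy => anti (mul_le_mul_of_nonneg_left hx hs.le)
    (mul_le_mul_of_nonneg_left hy hs.le) (mul_le_mul_of_nonneg_left hxy hs.le)

variable (nonneg : ∀ x ∈ Ioi (s * N), 0 ≤ f x)
include anti integrable nonneg

theorem summable_comp_mul_natCast : Summable fun n : ℕ => f (s * n) :=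
  (antitoneOn_comp_mul_left hs anti).summable_of_integrableOn_Ioi
    ((integrableOn_Ioi_comp_mul_left_iff f N hs).2 integrable)
    fun _ hx => nonneg _ (mul_lt_mul_of_pos_left hx hs)

theorem integral_Ioi_le_mul_tsum :
    ∫ x in Ioi (s * N), f x ≤ s * ∑' n : ℕ, f (s * (n + N : ℕ)) := by
  rw [← inv_mul_le_iff₀ hs, ← smul_eq_mul, ← integral_comp_mul_left_Ioi f N hs]
  exact (antitoneOn_comp_mul_left hs anti).integral_le_tsum_comp_add N
    (summable_comp_mul_natCast hs anti integrable nonneg)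
    fun _ hx => nonneg _ (mul_lt_mul_of_pos_left hx hs)

theorem mul_tsum_le_integral_Ioi :
    s * ∑' n : ℕ, f (s * (n + N + 1 : ℕ)) ≤ ∫ x in Ioi (s * N), f x := by
  rw [← le_inv_mul_iff₀ hs, ← smul_eq_mul, ← integral_comp_mul_left_Ioi f N hs]
  exact (antitoneOn_comp_mul_left hs anti).tsum_comp_add_le_integral N
    ((integrableOn_Ioi_comp_mul_left_iff f N hs).2 integrable)
    fun _ hx => nonneg _ (mul_lt_mul_of_pos_left hx hs)

end Mesh

theorem integral_Ioi_zero_sub_integral_Ioi_mem_Icc (hs : 0 ≤ s)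
    (integrable : IntegrableOn f (Ioi 0)) (nonneg : ∀ x ∈ Ioi 0, 0 ≤ f x)
    (le_one : ∀ x ∈ Ioi 0, f x ≤ 1) :
    (∫ x in Ioi 0, f x) - ∫ x in Ioi s, f x ∈ Icc 0 s := by
  rw [intervalIntegral.integral_Ioi_sub_Ioi integrable hs, intervalIntegral.integral_of_le hs]
  refine ⟨setIntegral_nonneg measurableSet_Ioc fun x hx => nonneg x hx.1, ?_⟩
  calc ∫ x in Ioc 0 s, f x ≤ ∫ _x in Ioc 0 s, (1 : ℝ) :=
        setIntegral_mono_on (integrable.mono_set Ioc_subset_Ioi_self) (by simp) measurableSet_Ioc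
          fun x hx => le_one x hx.1
    _ = s := by simp [hs]

variable (hs : 0 < s) (anti : AntitoneOn f (Ioi 0)) (integrable : IntegrableOn f (Ioi 0))
  (nonneg : ∀ x ∈ Ioi 0, 0 ≤ f x)
include hs anti integrable nonneg

theorem summable_comp_mul_add_one : Summable fun n : ℕ => f (s * (n + 1 : ℕ)) := by
  have sub : Ici (s * (1 : ℕ)) ⊆ Ioi 0 := Ici_subset_Ioi.2 (by simpa)
  exact (summable_nat_add_iff 1).2 (summable_comp_mul_natCast hs (anti.mono sub)
    (integrable.mono_set (Ioi_subset_Ici_self.trans sub))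
    fun x hx => nonneg x (sub (Ioi_subset_Ici_self hx)))

theorem abs_mul_tsum_sub_integral_le (le_one : ∀ x ∈ Ioi 0, f x ≤ 1) :
    |s * ∑' n : ℕ, f (s * (n + 1 : ℕ)) - ∫ x in Ioi 0, f x| ≤ s := by
  have sub : Ici (s * (1 : ℕ)) ⊆ Ioi 0 := Ici_subset_Ioi.2 (by simpa)
  have sub' : Ioi (s * (1 : ℕ)) ⊆ Ioi 0 := Ioi_subset_Ici_self.trans sub
  have lower := integral_Ioi_le_mul_tsum hs (anti.mono sub) (integrable.mono_set sub')
    fun x hx => nonneg x (sub' hx)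
  have upper := mul_tsum_le_integral_Ioi hs (anti.mono sub) (integrable.mono_set sub')
    fun x hx => nonneg x (sub' hx)
  have first_term := (summable_comp_mul_add_one hs anti integrable nonneg).tsum_eq_zero_add
  have first_le : s * f (s * (0 + 1 : ℕ)) ≤ s := mul_le_of_le_one_right hs.le (le_one _ (by simpa))
  have initial := integral_Ioi_zero_sub_integral_Ioi_mem_Icc hs.le integrable nonneg le_one
  rw [Nat.cast_one, mul_one] at lower upper
  rw [abs_le]
  refine ⟨by linarith [initial.2], ?_⟩
  rw [first_term, mul_add]
  linarith [initial.1]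

end RiemannSums

theorem antitoneOn_exp_neg_div : AntitoneOn (fun y => Real.exp (-y) / y) (Ioi 0) := by
  intro x hx y _ hxy
  have : 0 < x := hx
  dsimp only
  gcongr

theorem exp_neg_div_nonneg {y : ℝ} (hy : 0 ≤ y) : 0 ≤ Real.exp (-y) / y := by
  positivity

theorem continuousOn_exp_neg_div : ContinuousOn (fun y => Real.exp (-y) / y) (Ioi 0) :=
  (by fun_prop : Continuous fun y => Real.exp (-y)).continuousOn.div continuousOn_id
    fun _ hy => ne_of_gt hy

theorem exp_neg_div_le {x y : ℝ} (hx : 0 < x) (hxy : x ≤ y) :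
    Real.exp (-y) / y ≤ Real.exp (-y) / x := by
  gcongr

theorem integrableOn_exp_neg_div {x : ℝ} (hx : 0 < x) :
    IntegrableOn (fun y => Real.exp (-y) / y) (Ioi x) := by
  refine ((integrableOn_exp_neg_Ioi x).div_const x).mono'
    ((continuousOn_exp_neg_div.mono (Ioi_subset_Ioi hx.le)).aestronglyMeasurable measurableSet_Ioi)
    ((ae_restrict_mem measurableSet_Ioi).mono fun y hy => ?_)
  rw [Real.norm_of_nonneg (exp_neg_div_nonneg (hx.trans hy).le)]
  exact exp_neg_div_le hx (le_of_lt hy)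

theorem Efun_nonneg {x : ℝ} (hx : 0 ≤ x) : 0 ≤ Efun x :=
  setIntegral_nonneg measurableSet_Ioi fun _ hy => exp_neg_div_nonneg (hx.trans (le_of_lt hy))

theorem antitoneOn_Efun : AntitoneOn Efun (Ioi 0) := fun _ hx _ _ hxy =>
  setIntegral_mono_set (integrableOn_exp_neg_div hx)
    ((ae_restrict_mem measurableSet_Ioi).mono fun _ ht => exp_neg_div_nonneg
      (le_of_lt (lt_trans (mem_Ioi.1 hx) ht))) (Ioi_subset_Ioi hxy).eventuallyLE

theorem Efun_le {x : ℝ} (hx : 0 < x) : Efun x ≤ Real.exp (-x) / x := by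
  rw [Efun, ← integral_exp_neg_Ioi x, ← integral_div]
  exact setIntegral_mono_on (integrableOn_exp_neg_div hx)
    ((integrableOn_exp_neg_Ioi x).div_const x) measurableSet_Ioi
    fun y hy => exp_neg_div_le hx (le_of_lt hy)

theorem hasDerivAt_Efun {x : ℝ} (hx : 0 < x) : HasDerivAt Efun (-(Real.exp (-x) / x)) x := by
  have half : 0 < x / 2 := half_pos hx
  have deriv : HasDerivAt (fun u => ∫ t in (x / 2)..u, Real.exp (-t) / t) (Real.exp (-x) / x) x :=
    intervalIntegral.integral_hasDerivAt_right
      ((continuousOn_exp_neg_div.mono fun t ht => half.trans_le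
        (uIcc_of_le (half_le_self hx.le) ▸ ht).1).intervalIntegrable)
      (continuousOn_exp_neg_div.stronglyMeasurableAtFilter isOpen_Ioi _ hx)
      (continuousOn_exp_neg_div.continuousAt (Ioi_mem_nhds hx))
  refine (deriv.const_sub (Efun (x / 2))).congr_of_eventuallyEq ?_
  filter_upwards [Ioi_mem_nhds (half_lt_self hx)] with u hu
  rw [Efun, Efun, ← intervalIntegral.integral_Ioi_sub_Ioi (integrableOn_exp_neg_div half)
    (le_of_lt hu), sub_sub_cancel]

/-- The limit as `s → 0⁺` of the probability that the longest cycle is longer than `u / s`, in a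
random cyclation whose size is `n` with probability proportional to `coeff n * exp (-s * n)`. As
`Efun 0` is a junk value, only `0 < u` is meaningful. -/
noncomputable def exceedance (u : ℝ) : ℝ :=
  1 - Real.exp (-Efun u / 2)

theorem exceedance_le_one (u : ℝ) : exceedance u ≤ 1 :=
  sub_le_self 1 (Real.exp_pos _).le

theorem exceedance_nonneg {u : ℝ} (hu : 0 ≤ u) : 0 ≤ exceedance u :=
  sub_nonneg.2 (Real.exp_le_one_iff.2 (by linarith [Efun_nonneg hu]))

theorem antitoneOn_exceedance : AntitoneOn exceedance (Ioi 0) := fun x hx y hy hxy => by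
  have := antitoneOn_Efun hx hy hxy
  rw [exceedance, exceedance]
  gcongr

theorem mul_exceedance_le {u : ℝ} (hu : 0 < u) : u * exceedance u ≤ Real.exp (-u) := by
  have : exceedance u ≤ Real.exp (-u) / u := by
    have := Real.add_one_le_exp (-Efun u / 2)
    rw [exceedance]
    linarith [Efun_le hu, Efun_nonneg hu.le]
  rwa [le_div_iff₀' hu] at this

theorem hasDerivAt_exceedance {x : ℝ} (hx : 0 < x) :
    HasDerivAt exceedance (-(Real.exp (-Efun x / 2) * (Real.exp (-x) / x) / 2)) x := by
  convert! (((hasDerivAt_Efun hx).neg.div_const 2).exp).const_sub 1 using 1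
  rw [Pi.neg_apply]
  ring

theorem integrableOn_exceedance : IntegrableOn exceedance (Ioi 0) := by
  refine ((integrableOn_exp_neg_Ioi 0).const_mul (Real.exp 1)).mono' ?_
    ((ae_restrict_mem measurableSet_Ioi).mono fun x (hx : 0 < x) => ?_)
  · exact ContinuousOn.aestronglyMeasurable (fun x hx =>
      (hasDerivAt_exceedance hx).continuousAt.continuousWithinAt) measurableSet_Ioi
  · rw [Real.norm_of_nonneg (exceedance_nonneg hx.le), ← Real.exp_add]
    rcases le_total x 1 with h | h
    · exact (exceedance_le_one x).trans (Real.one_le_exp (by linarith))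
    · calc exceedance x ≤ x * exceedance x := le_mul_of_one_le_left (exceedance_nonneg hx.le) h
        _ ≤ Real.exp (-x) := mul_exceedance_le hx
        _ ≤ Real.exp (1 + -x) := Real.exp_le_exp.2 (by linarith)

theorem integrableOn_exp_neg_Efun_div_two_sub :
    IntegrableOn (fun x => Real.exp (-(Efun x) / 2 - x)) (Ioi 0) := by
  refine (integrableOn_exp_neg_Ioi 0).mono' ?_
    ((ae_restrict_mem measurableSet_Ioi).mono fun x (hx : 0 < x) => ?_)
  · refine ContinuousOn.aestronglyMeasurable (fun x hx => ?_) measurableSet_Ioi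
    have := (hasDerivAt_Efun hx).continuousAt
    exact ContinuousAt.continuousWithinAt (by fun_prop)
  · rw [Real.norm_of_nonneg (Real.exp_pos _).le]
    exact Real.exp_le_exp.2 (by linarith [Efun_nonneg hx.le])

theorem continuousWithinAt_mul_exceedance_zero :
    ContinuousWithinAt (fun u => u * exceedance u) (Ici 0) 0 := by
  rw [ContinuousWithinAt, zero_mul]
  refine squeeze_zero' ?_ ?_ (tendsto_id'.2 (nhdsWithin_le_nhds (a := (0 : ℝ))))
  · filter_upwards [self_mem_nhdsWithin] with u hu using mul_nonneg hu (exceedance_nonneg hu)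
  · filter_upwards [self_mem_nhdsWithin] with u hu
    exact mul_le_of_le_one_right hu (exceedance_le_one u)

theorem tendsto_mul_exceedance_atTop : Tendsto (fun u => u * exceedance u) atTop (𝓝 0) := by
  refine squeeze_zero' ?_ ?_ Real.tendsto_exp_neg_atTop_nhds_zero
  · filter_upwards [eventually_gt_atTop 0] with u hu
    exact mul_nonneg hu.le (exceedance_nonneg hu.le)
  · filter_upwards [eventually_gt_atTop 0] with u hu using mul_exceedance_le hu

theorem integral_exp_neg_Efun_div_two_sub :
    ∫ x in Ioi (0 : ℝ), Real.exp (-(Efun x) / 2 - x) = 2 * ∫ x in Ioi (0 : ℝ), exceedance x := by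
  have deriv (x : ℝ) (hx : x ∈ Ioi 0) : HasDerivAt (fun u => u * exceedance u)
      (exceedance x - Real.exp (-(Efun x) / 2 - x) / 2) x := by
    have : x ≠ 0 := ne_of_gt hx
    convert! (hasDerivAt_id x).mul (hasDerivAt_exceedance hx) using 1
    rw [sub_eq_add_neg (-Efun x / 2), Real.exp_add, id]
    field_simp
    ring
  have target_integrable := integrableOn_exp_neg_Efun_div_two_sub.div_const 2
  have parts := integral_Ioi_of_hasDerivAt_of_tendsto continuousWithinAt_mul_exceedance_zero deriv
    (integrableOn_exceedance.sub target_integrable) tendsto_mul_exceedance_atTop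
  rw [integral_sub integrableOn_exceedance target_integrable, integral_div, zero_mul] at parts
  linarith

section LogTail

variable {s : ℝ} (hs : 0 < s)
include hs

theorem logTail_exp_neg_eq_mul_tsum (k : ℕ) :
    logTail k (Real.exp (-s)) =
      s * ∑' j : ℕ, Real.exp (-(s * (j + k + 1 : ℕ))) / (s * (j + k + 1 : ℕ)) := by
  rw [logTail, ← tsum_mul_left]
  refine tsum_congr fun j => ?_
  rw [← Real.exp_nat_mul, mul_neg, mul_comm s]
  push_cast
  field_simp

theorem Efun_le_logTail (k : ℕ) : Efun (s * (k + 1 : ℕ)) ≤ logTail k (Real.exp (-s)) := by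
  have pos : 0 < s * (k + 1 : ℕ) := by positivity
  rw [logTail_exp_neg_eq_mul_tsum hs]
  exact integral_Ioi_le_mul_tsum hs (antitoneOn_exp_neg_div.mono (Ici_subset_Ioi.2 pos))
    (integrableOn_exp_neg_div pos) fun y hy => exp_neg_div_nonneg (pos.trans hy).le

theorem logTail_add_one_le_Efun (k : ℕ) :
    logTail (k + 1) (Real.exp (-s)) ≤ Efun (s * (k + 1 : ℕ)) := by
  have pos : 0 < s * (k + 1 : ℕ) := by positivity
  rw [logTail_exp_neg_eq_mul_tsum hs]
  exact mul_tsum_le_integral_Ioi hs (antitoneOn_exp_neg_div.mono (Ici_subset_Ioi.2 pos))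
    (integrableOn_exp_neg_div pos) fun y hy => exp_neg_div_nonneg (pos.trans hy).le

theorem exceedance_le_one_sub_exp_logTail (k : ℕ) :
    exceedance (s * (k + 1 : ℕ)) ≤ 1 - Real.exp (-logTail k (Real.exp (-s)) / 2) := by
  have := Efun_le_logTail hs k
  rw [exceedance]
  gcongr

theorem one_sub_exp_logTail_add_one_le_exceedance (k : ℕ) :
    1 - Real.exp (-logTail (k + 1) (Real.exp (-s)) / 2) ≤ exceedance (s * (k + 1 : ℕ)) := by
  have := logTail_add_one_le_Efun hs k
  rw [exceedance]
  gcongr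

theorem summable_exceedance : Summable fun k : ℕ => exceedance (s * (k + 1 : ℕ)) :=
  summable_comp_mul_add_one hs antitoneOn_exceedance integrableOn_exceedance
    fun _ hx => exceedance_nonneg (le_of_lt hx)

theorem logTail_exp_neg_nonneg (k : ℕ) : 0 ≤ logTail k (Real.exp (-s)) :=
  (Efun_nonneg (by positivity)).trans (Efun_le_logTail hs k)

theorem summable_one_sub_exp_logTail :
    Summable fun k => 1 - Real.exp (-logTail k (Real.exp (-s)) / 2) := by
  refine (summable_nat_add_iff 1).1 (.of_nonneg_of_le (fun k => sub_nonneg.2 ?_)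
    (one_sub_exp_logTail_add_one_le_exceedance hs) (summable_exceedance hs))
  exact Real.exp_le_one_iff.2 (by linarith [logTail_exp_neg_nonneg hs (k + 1)])

theorem abs_mul_tsum_one_sub_exp_logTail_sub_integral_le :
    |s * ∑' k, (1 - Real.exp (-logTail k (Real.exp (-s)) / 2)) - ∫ u in Ioi 0, exceedance u| ≤
      2 * s := by
  have riemann := abs_le.1 (abs_mul_tsum_sub_integral_le hs antitoneOn_exceedance
    integrableOn_exceedance (fun _ hx => exceedance_nonneg (le_of_lt hx))
    fun x _ => exceedance_le_one x)
  have lower := mul_le_mul_of_nonneg_left ((summable_exceedance hs).tsum_le_tsum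
    (exceedance_le_one_sub_exp_logTail hs) (summable_one_sub_exp_logTail hs)) hs.le
  have upper := mul_le_mul_of_nonneg_left
    (((summable_nat_add_iff 1).2 (summable_one_sub_exp_logTail hs)).tsum_le_tsum
      (one_sub_exp_logTail_add_one_le_exceedance hs) (summable_exceedance hs)) hs.le
  have first_le : s * (1 - Real.exp (-logTail 0 (Real.exp (-s)) / 2)) ≤ s :=
    mul_le_of_le_one_right hs.le (sub_le_self 1 (Real.exp_pos _).le)
  rw [abs_le]
  refine ⟨by linarith [riemann.1], ?_⟩
  rw [(summable_one_sub_exp_logTail hs).tsum_eq_zero_add, mul_add]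
  linarith [riemann.2]

end LogTail

theorem tendsto_mul_tsum_one_sub_exp_logTail :
    Tendsto (fun s => s * ∑' k, (1 - Real.exp (-logTail k (Real.exp (-s)) / 2))) (𝓝[>] 0)
      (𝓝 (∫ u in Ioi 0, exceedance u)) := by
  rw [tendsto_iff_norm_sub_tendsto_zero]
  refine squeeze_zero' (.of_forall fun _ => norm_nonneg _) (g := fun s => 2 * s) ?_ ?_
  · filter_upwards [self_mem_nhdsWithin] with s hs
    exact abs_mul_tsum_one_sub_exp_logTail_sub_integral_le hs
  · exact ((continuous_const_mul 2).tendsto' 0 0 (mul_zero 2)).mono_left nhdsWithin_le_nhds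

theorem tendsto_one_sub_exp_neg_div :
    Tendsto (fun s => (1 - Real.exp (-s)) / s) (𝓝[>] 0) (𝓝 1) := by
  have deriv : HasDerivAt (fun s => 1 - Real.exp (-s)) 1 0 := by
    simpa using (hasDerivAt_neg (0 : ℝ)).exp.const_sub 1
  refine (hasDerivAt_iff_tendsto_slope_zero.1 deriv).mono_left (nhdsGT_le_nhdsNE 0) |>.congr ?_
  intro s
  simp [div_eq_inv_mul]

theorem tendsto_exp_neg_nhdsGT_zero : Tendsto (fun s => Real.exp (-s)) (𝓝[>] 0) (𝓝[<] 1) := by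
  refine tendsto_nhdsWithin_iff.2 ⟨?_, ?_⟩
  · have : Continuous fun s => Real.exp (-s) := by fun_prop
    exact (this.tendsto' 0 1 (by simp)).mono_left nhdsWithin_le_nhds
  · filter_upwards [self_mem_nhdsWithin] with s hs using Real.exp_lt_one_iff.2 (neg_lt_zero.2 hs)

namespace Cyclation

theorem tendsto_meanRatio : Tendsto meanRatio atTop (𝓝 (∫ u in Ioi 0, exceedance u)) := by
  obtain ⟨L, hL⟩ := exists_tendsto_meanRatio
  have abel := (tendsto_tsum_one_sub_exp_logTail hL).comp tendsto_exp_neg_nhdsGT_zero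
  have riemann := tendsto_one_sub_exp_neg_div.mul tendsto_mul_tsum_one_sub_exp_logTail
  rw [one_mul] at riemann
  have eq : L = ∫ u in Ioi 0, exceedance u := by
    refine tendsto_nhds_unique (abel.congr' ?_) riemann
    filter_upwards [self_mem_nhdsWithin] with s (hs : 0 < s)
    rw [Function.comp_apply, tsum_mul_left, ← mul_assoc, div_mul_cancel₀ _ hs.ne']
  exact eq ▸ hL

theorem tendsto_two_mul_add_one_div : Tendsto (fun n : ℕ => (2 * n + 1 : ℝ) / n) atTop (𝓝 2) := by
  have : Tendsto (fun n : ℕ => 2 + 1 / (n : ℝ)) atTop (𝓝 2) := by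
    simpa using (tendsto_one_div_atTop_nhds_zero_nat (𝕜 := ℝ)).const_add 2
  refine this.congr' ?_
  filter_upwards [eventually_ne_atTop 0] with n hn
  field_simp

end Cyclation

end ScalingLimit

/-- `Ex[M_n] ∼ (∫_0^∞ e^{−E(x)/2 − x} dx) · n` as `n → ∞`:
the expected length of the longest cycle of a random `n`-cyclation, divided by `n`,
tends to `∫_0^∞ e^{−E(x)/2 − x} dx`. -/
theorem expected_longest_cycle_asymptotic :
    Filter.Tendsto (fun n : ℕ => ExM n / n) Filter.atTop
      (nhds (∫ x in Set.Ioi (0 : ℝ), Real.exp (-(Efun x) / 2 - x))) := by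
  rw [integral_exp_neg_Efun_div_two_sub]
  refine (Cyclation.tendsto_two_mul_add_one_div.mul Cyclation.tendsto_meanRatio).congr fun n => ?_
  rw [Cyclation.meanRatio, div_mul_div_comm, mul_comm, mul_div_mul_right _ _ (by positivity)]
end
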